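/- arXiv:1212.2080 — 2 statements merged into one kernel-verified Lean document; each statement's English description precedes it below -/
import Mathlib

section
/- Let M be a tropical oriented matroid with parameters (n,d). Define the dual collection M† of (d,n)-types as follows: for a vertex A of M (a type of dimension 0), its dual type A† is the (d,n)-type with (A†)_j = {i ∈ [n] : j ∈ A_i} for j ∈ [d], and M† = { (A†)|_P : A a vertex of M, P an ordered partition of [n] }, where (A†)|_P denotes the refinement of A† with respect to P (with the roles of n and d interchanged). Then M† is a tropical oriented matroid with parameters (d,n). -/
/-- A step from `j` to `k` along an edge of the comparability graph `Γ(A,B)`,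
traversed in an allowed direction: there is `i` with `j ∈ A i`, `k ∈ B i`, `j ≠ k`
(such an edge is undirected precisely when moreover `j ∈ B i` and `k ∈ A i`, and then
the reversed step is also of this form). -/
def CompStep {n d : ℕ} (A B : Fin n → Finset (Fin d)) (j k : Fin d) : Prop :=
  ∃ i, j ∈ A i ∧ k ∈ B i ∧ j ≠ k

/-- A traversal of a *directed* edge of `Γ(A,B)` in its given direction. -/
def CompDirStep {n d : ℕ} (A B : Fin n → Finset (Fin d)) (j k : Fin d) : Prop :=
  ∃ i, j ∈ A i ∧ k ∈ B i ∧ j ≠ k ∧ ¬ (j ∈ B i ∧ k ∈ A i)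

/-- The comparability graph `Γ(A,B)` is acyclic: there is no closed walk consisting
of legally traversed edges at least one of which is directed. -/
def CompAcyclic {n d : ℕ} (A B : Fin n → Finset (Fin d)) : Prop :=
  ¬ ∃ j k : Fin d, CompDirStep A B j k ∧ Relation.ReflTransGen (CompStep A B) k j

/-- An ordered partition of the ground set: a list of nonempty, pairwise disjoint
sets covering everything. -/
def IsOrderedPartition {α : Type*} [Fintype α] [DecidableEq α]
    (P : List (Finset α)) : Prop :=
  (∀ p ∈ P, p.Nonempty) ∧ P.Pairwise Disjoint ∧ P.foldr (· ∪ ·) ∅ = Finset.univ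

/-- `refineEntry s P = s ∩ P_{m}` where `m` is the first index with `s ∩ P_m ≠ ∅`. -/
def refineEntry {α : Type*} [DecidableEq α] (s : Finset α) :
    List (Finset α) → Finset α
  | [] => ∅
  | p :: rest => if (s ∩ p).Nonempty then s ∩ p else refineEntry s rest

/-- The refinement `A|_P` of a type `A` with respect to an ordered partition `P`. -/
def refineType {n d : ℕ} (A : Fin n → Finset (Fin d)) (P : List (Finset (Fin d))) :
    Fin n → Finset (Fin d) :=
  fun i => refineEntry (A i) P

/-- `M` is a tropical oriented matroid with parameters `(n,d)`. -/
def IsTOM (n d : ℕ) (M : Set (Fin n → Finset (Fin d))) : Prop :=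
  (∀ A ∈ M, ∀ i, (A i).Nonempty) ∧
  (∀ j : Fin d, (fun _ : Fin n => ({j} : Finset (Fin d))) ∈ M) ∧
  (∀ A ∈ M, ∀ B ∈ M, CompAcyclic A B) ∧
  (∀ A ∈ M, ∀ B ∈ M, ∀ j : Fin n, ∃ C ∈ M, C j = A j ∪ B j ∧
      ∀ k, C k = A k ∨ C k = B k ∨ C k = A k ∪ B k) ∧
  (∀ A ∈ M, ∀ P : List (Finset (Fin d)), IsOrderedPartition P → refineType A P ∈ M)

/-- The type graph `K_A`: the bipartite graph on `N_1,…,N_n,D_1,…,D_d` with an edge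
`{N_i, D_j}` whenever `j ∈ A_i`. -/
def typeGraph {n d : ℕ} (A : Fin n → Finset (Fin d)) : SimpleGraph (Fin n ⊕ Fin d) :=
  SimpleGraph.fromRel (fun x y =>
    match x, y with
    | Sum.inl i, Sum.inr j => j ∈ A i
    | _, _ => False)

/-- The dimension of a type: the number of connected components of `K_A` minus 1
(as an integer). -/
noncomputable def typeDim {n d : ℕ} (A : Fin n → Finset (Fin d)) : ℤ :=
  (Nat.card (typeGraph A).ConnectedComponent : ℤ) - 1

/-- A tropical oriented matroid is in general position if all its type graphs are
acyclic. -/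
def InGeneralPosition {n d : ℕ} (M : Set (Fin n → Finset (Fin d))) : Prop :=
  ∀ A ∈ M, (typeGraph A).IsAcyclic

/-- Two types are incident if one is an entrywise subset of the other. -/
def Incident {n d : ℕ} (X Y : Fin n → Finset (Fin d)) : Prop :=
  (∀ i, X i ⊆ Y i) ∨ (∀ i, Y i ⊆ X i)

/-- The combinatorial convex hull `M_{AB}` of two types within a collection `M`. -/
def Hull {n d : ℕ} (M : Set (Fin n → Finset (Fin d)))
    (A B : Fin n → Finset (Fin d)) : Set (Fin n → Finset (Fin d)) :=
  {C | C ∈ M ∧ ∀ i, C i = A i ∨ C i = B i ∨ C i = A i ∪ B i}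

/-- `X` and `Y` are joined by a finite sequence of types in `S` in which consecutive
types are incident. -/
def ConnectedIn {n d : ℕ} (S : Set (Fin n → Finset (Fin d)))
    (X Y : Fin n → Finset (Fin d)) : Prop :=
  Relation.ReflTransGen (fun U V => U ∈ S ∧ V ∈ S ∧ Incident U V) X Y

/-- The dual `(d,n)`-type of an `(n,d)`-type: `(A†)_j = {i : j ∈ A_i}`. -/
def dualType {n d : ℕ} (A : Fin n → Finset (Fin d)) : Fin d → Finset (Fin n) :=
  fun j => Finset.univ.filter (fun i => j ∈ A i)

/-!
Acyclicity of `Γ(A,B)` amounts to the existence of integer weights on rows and columns, a condition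
that is self-dual and survives refinement. This gives every axiom for `M†` except elimination.

The types of `M`, ordered by inclusion, behave like the cells of a subdivided simplex: over `ℤ/2`,
the boundary of the sum of all maximal simplices of the barycentric subdivision of the face with
columns `K` is the sum of the corresponding chains over the faces `K \ {k}`. The proof is by
induction on the number of columns, together with saturation: a type compatible with all members of
`M` belongs to `M`. Saturation for fewer columns shows that each interior wall is shared by two
vertices, which gives the boundary formula; Sperner's lemma for the resulting chains gives
saturation for all columns.

For elimination in `M†` between `A†` and `B†` at position `j`, each type `D` of `M` carries weights
certifying its compatibility with `A` and with `B`. Extending them affinely over the subdivided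
simplex and normalizing at `j` gives functions `a k` and `b k`. The KKM lemma, obtained from
Sperner's lemma by iterated subdivision, yields a point at which `min (a k) (b k)` vanishes for
every column `k`. The smallest type in the support of that point, together with the sets where `a`
and `b` vanish, determines the type of `M†` that eliminates.
-/

namespace TropicalOrientedMatroid

noncomputable section

/-! ### Chains modulo two and Sperner's lemma -/

section Chains

variable {X Y N : Type*} [AddCommGroup N] [Module (ZMod 2) N]

/-- Simplicial chains with coefficients in `ℤ/2` on the full simplex with vertex set `X`. The empty
simplex is included, so that homology is reduced. -/
abbrev Chain (X : Type*) := Finset X →₀ ZMod 2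

/-- The chain consisting of one simplex. -/
abbrev simplex (σ : Finset X) : Chain X := Finsupp.single σ 1

/-- The chains all of whose simplices lie in `S`. -/
abbrev chainsIn (S : Set (Finset X)) : Submodule (ZMod 2) (Chain X) :=
  Finsupp.supported (ZMod 2) (ZMod 2) S

lemma simplex_mem_chainsIn {S : Set (Finset X)} {σ : Finset X} (hσ : σ ∈ S) :
    simplex σ ∈ chainsIn S :=
  Finsupp.single_mem_supported _ _ hσ

lemma apply_mem_of_mem_chainsIn {S : Set (Finset X)} (L : Chain X →ₗ[ZMod 2] N)
    (W : Submodule (ZMod 2) N) (h : ∀ σ ∈ S, L (simplex σ) ∈ W) {z : Chain X}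
    (hz : z ∈ chainsIn S) : L z ∈ W := by
  have hle : chainsIn S ≤ W.comap L := by
    rw [chainsIn, Finsupp.supported_eq_span_single, Submodule.span_le]
    rintro _ ⟨σ, hσ, rfl⟩
    exact h σ hσ
  exact hle hz

lemma eq_of_mem_chainsIn {S : Set (Finset X)} {L L' : Chain X →ₗ[ZMod 2] N}
    (h : ∀ σ ∈ S, L (simplex σ) = L' (simplex σ)) {z : Chain X} (hz : z ∈ chainsIn S) :
    L z = L' z := by
  have := apply_mem_of_mem_chainsIn (L - L') ⊥ (fun σ hσ => by simp [h σ hσ]) hz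
  simpa [sub_eq_zero] using this

lemma linearMap_ext {L L' : Chain X →ₗ[ZMod 2] N}
    (h : ∀ σ, L (simplex σ) = L' (simplex σ)) : L = L' :=
  LinearMap.ext fun _ => eq_of_mem_chainsIn (S := Set.univ) (fun σ _ => h σ) (by simp)

lemma exists_mem_of_apply_ne_zero {S : Set (Finset X)} {L : Chain X →ₗ[ZMod 2] N} {z : Chain X}
    (hz : z ∈ chainsIn S) (hL : L z ≠ 0) : ∃ σ ∈ S, L (simplex σ) ≠ 0 := by
  contrapose! hL
  exact eq_of_mem_chainsIn (L' := 0) (by simpa using hL) hz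

lemma sum_sum_eq_zero_of_symm {s : Finset X} {t : X → Finset X} {f : X → X → N}
    (ht : ∀ x ∈ s, ∀ y ∈ t x, y ∈ s ∧ x ∈ t y ∧ x ≠ y)
    (hf : ∀ x ∈ s, ∀ y ∈ t x, f x y = f y x) : ∑ x ∈ s, ∑ y ∈ t x, f x y = 0 := by
  rw [Finset.sum_sigma']
  refine Finset.sum_involution (fun p _ => ⟨p.2, p.1⟩) ?_ ?_ ?_ (fun _ _ => rfl)
  · rintro ⟨x, y⟩ hxy
    rw [Finset.mem_sigma] at hxy
    rw [hf x hxy.1 y hxy.2, ZModModule.add_self]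
  · rintro ⟨x, y⟩ hxy _ heq
    rw [Finset.mem_sigma] at hxy
    exact (ht x hxy.1 y hxy.2).2.2 (Sigma.mk.inj heq).1.symm
  · rintro ⟨x, y⟩ hxy
    rw [Finset.mem_sigma] at hxy ⊢
    exact ⟨(ht x hxy.1 y hxy.2).1, (ht x hxy.1 y hxy.2).2.1⟩

variable [DecidableEq Y]

open Classical in
/-- The chain map induced by a map of vertices; simplices which are collapsed go to `0`. -/
def pushforward (f : X → Y) : Chain X →ₗ[ZMod 2] Chain Y :=
  Finsupp.linearCombination (ZMod 2) fun σ => if Set.InjOn f σ then simplex (σ.image f) else 0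

lemma pushforward_simplex_of_injOn {f : X → Y} {σ : Finset X} (h : Set.InjOn f σ) :
    pushforward f (simplex σ) = simplex (σ.image f) := by
  simp [pushforward, h]

lemma pushforward_simplex_of_not_injOn {f : X → Y} {σ : Finset X} (h : ¬ Set.InjOn f σ) :
    pushforward f (simplex σ) = 0 := by
  simp [pushforward, h]

lemma pushforward_mem_chainsIn {S : Set (Finset X)} {T : Set (Finset Y)} {f : X → Y}
    (h : ∀ σ ∈ S, σ.image f ∈ T) {z : Chain X} (hz : z ∈ chainsIn S) :
    pushforward f z ∈ chainsIn T := by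
  refine apply_mem_of_mem_chainsIn _ _ (fun σ hσ => ?_) hz
  by_cases hinj : Set.InjOn f σ
  · rw [pushforward_simplex_of_injOn hinj]
    exact simplex_mem_chainsIn (h σ hσ)
  · rw [pushforward_simplex_of_not_injOn hinj]
    exact zero_mem _

lemma exists_image_eq_of_pushforward_apply_ne_zero {S : Set (Finset X)} {f : X → Y} {K : Finset Y}
    {z : Chain X} (hz : z ∈ chainsIn S) (h : pushforward f z K ≠ 0) : ∃ σ ∈ S, σ.image f = K := by
  obtain ⟨σ, hσ, hne⟩ := exists_mem_of_apply_ne_zero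
    (L := Finsupp.lapply K ∘ₗ pushforward f) hz h
  refine ⟨σ, hσ, ?_⟩
  by_contra hK
  by_cases hinj : Set.InjOn f σ
  · simp [pushforward_simplex_of_injOn hinj, hK] at hne
  · simp [pushforward_simplex_of_not_injOn hinj] at hne

variable [DecidableEq X]

/-- The simplicial boundary. -/
def boundary : Chain X →ₗ[ZMod 2] Chain X :=
  Finsupp.linearCombination (ZMod 2) fun σ => ∑ x ∈ σ, simplex (σ.erase x)

@[simp]
lemma boundary_simplex (σ : Finset X) :
    boundary (simplex σ) = ∑ x ∈ σ, simplex (σ.erase x) := by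
  simp [boundary]

lemma boundary_boundary (z : Chain X) : boundary (boundary z) = 0 := by
  suffices boundary ∘ₗ boundary = (0 : Chain X →ₗ[ZMod 2] Chain X) from LinearMap.congr_fun this z
  refine linearMap_ext fun σ => ?_
  simp only [LinearMap.comp_apply, boundary_simplex, map_sum, LinearMap.zero_apply]
  refine sum_sum_eq_zero_of_symm (fun x hx y hy => ?_)
    fun x _ y _ => by rw [Finset.erase_right_comm]
  rw [Finset.mem_erase] at hy ⊢
  exact ⟨hy.2, ⟨hy.1.symm, hx⟩, hy.1.symm⟩

/-- The cone with apex `p`; a simplex already containing `p` has degenerate cone `0`. -/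
def cone (p : X) : Chain X →ₗ[ZMod 2] Chain X :=
  Finsupp.linearCombination (ZMod 2) fun σ => if p ∈ σ then 0 else simplex (insert p σ)

lemma cone_simplex (p : X) (σ : Finset X) :
    cone p (simplex σ) = if p ∈ σ then 0 else simplex (insert p σ) := by
  simp [cone]

lemma cone_cone (p : X) (z : Chain X) : cone p (cone p z) = 0 := by
  suffices cone p ∘ₗ cone p = (0 : Chain X →ₗ[ZMod 2] Chain X) from LinearMap.congr_fun this z
  refine linearMap_ext fun σ => ?_
  by_cases hp : p ∈ σ <;> simp [cone_simplex, hp]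

lemma boundary_cone (p : X) (z : Chain X) : boundary (cone p z) = z + cone p (boundary z) := by
  suffices boundary ∘ₗ cone p = LinearMap.id + cone p ∘ₗ boundary from LinearMap.congr_fun this z
  refine linearMap_ext fun σ => ?_
  simp only [LinearMap.comp_apply, LinearMap.add_apply, LinearMap.id_apply, boundary_simplex,
    map_sum]
  by_cases hp : p ∈ σ
  · rw [Finset.sum_eq_single_of_mem p hp fun y _ hyp => ?_]
    · simp [cone_simplex, hp, ZModModule.add_self]
    · rw [cone_simplex, if_pos (Finset.mem_erase.2 ⟨hyp.symm, hp⟩)]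
  · rw [cone_simplex, if_neg hp, boundary_simplex, Finset.sum_insert hp, Finset.erase_insert hp]
    congr 1
    refine Finset.sum_congr rfl fun y hy => ?_
    have hyp : p ≠ y := fun h => hp (h ▸ hy)
    rw [cone_simplex, if_neg (by simp [hp]), Finset.erase_insert_of_ne hyp]

lemma cone_mem_chainsIn {S T : Set (Finset X)} {p : X} (h : ∀ σ ∈ S, insert p σ ∈ T)
    {z : Chain X} (hz : z ∈ chainsIn S) : cone p z ∈ chainsIn T := by
  refine apply_mem_of_mem_chainsIn _ _ (fun σ hσ => ?_) hz
  rw [cone_simplex]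
  split_ifs
  · exact zero_mem _
  · exact simplex_mem_chainsIn (h σ hσ)

lemma image_erase_eq_image_of_mem {f : X → Y} {σ : Finset X} {x y : X} (hy : y ∈ σ)
    (hyx : y ≠ x) (hxy : f x = f y) : (σ.erase x).image f = σ.image f := by
  refine (Finset.image_subset_image (Finset.erase_subset _ _)).antisymm fun b hb => ?_
  obtain ⟨z, hz, rfl⟩ := Finset.mem_image.1 hb
  by_cases hzx : z = x
  · exact Finset.mem_image.2 ⟨y, Finset.mem_erase.2 ⟨hyx, hy⟩, by rw [hzx, hxy]⟩
  · exact Finset.mem_image_of_mem _ (Finset.mem_erase.2 ⟨hzx, hz⟩)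

lemma pushforward_erase_eq_of_apply_eq {f : X → Y} {σ : Finset X} {x y : X} (hx : x ∈ σ)
    (hy : y ∈ σ) (hne : x ≠ y) (hxy : f x = f y) :
    pushforward f (simplex (σ.erase x)) = pushforward f (simplex (σ.erase y)) := by
  have himage : (σ.erase x).image f = (σ.erase y).image f := by
    rw [image_erase_eq_image_of_mem hy hne.symm hxy, image_erase_eq_image_of_mem hx hne hxy.symm]
  have hinj : Set.InjOn f (σ.erase x) ↔ Set.InjOn f (σ.erase y) := by
    rw [← Finset.card_image_iff, ← Finset.card_image_iff, himage, Finset.card_erase_of_mem hx,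
      Finset.card_erase_of_mem hy]
  by_cases h : Set.InjOn f (σ.erase x)
  · rw [pushforward_simplex_of_injOn h, pushforward_simplex_of_injOn (hinj.1 h), himage]
  · rw [pushforward_simplex_of_not_injOn h, pushforward_simplex_of_not_injOn (mt hinj.2 h)]

lemma boundary_pushforward (f : X → Y) (z : Chain X) :
    boundary (pushforward f z) = pushforward f (boundary z) := by
  suffices boundary ∘ₗ pushforward f = pushforward f ∘ₗ boundary from LinearMap.congr_fun this z
  refine linearMap_ext fun σ => ?_
  simp only [LinearMap.comp_apply, boundary_simplex, map_sum]
  by_cases hinj : Set.InjOn f σ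
  · rw [pushforward_simplex_of_injOn hinj, boundary_simplex, Finset.sum_image hinj]
    refine Finset.sum_congr rfl fun x hx => ?_
    rw [pushforward_simplex_of_injOn (hinj.mono (Finset.coe_subset.2 (Finset.erase_subset _ _)))]
    congr 1
    ext b
    simp only [Finset.mem_erase, Finset.mem_image]
    constructor
    · rintro ⟨hb, y, hy, rfl⟩
      exact ⟨y, ⟨fun h => hb (h ▸ rfl), hy⟩, rfl⟩
    · rintro ⟨y, ⟨hyx, hy⟩, rfl⟩
      exact ⟨fun h => hyx (hinj hy hx h), y, hy, rfl⟩
  · rw [pushforward_simplex_of_not_injOn hinj, map_zero]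
    obtain ⟨x, hx, y, hy, hxy, hne⟩ : ∃ x ∈ σ, ∃ y ∈ σ, f x = f y ∧ x ≠ y := by
      simpa [Set.InjOn] using hinj
    rw [← Finset.sum_subset (s₁ := {x, y}) (by simp [Finset.insert_subset_iff, hx, hy])
      fun z _ hz => pushforward_simplex_of_not_injOn fun h => hne ?_, Finset.sum_pair hne,
      pushforward_erase_eq_of_apply_eq hx hy hne hxy, ZModModule.add_self]
    simp only [Finset.mem_insert, Finset.mem_singleton, not_or] at hz
    exact h (by simp [hx, Ne.symm hz.1]) (by simp [hy, Ne.symm hz.2]) hxy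

lemma boundary_apply_erase {K : Finset X} {z : Chain X} (hz : z ∈ chainsIn {σ | σ ⊆ K}) {v : X}
    (hv : v ∈ K) : boundary z (K.erase v) = z K := by
  refine eq_of_mem_chainsIn (L := Finsupp.lapply (K.erase v) ∘ₗ boundary) (L' := Finsupp.lapply K)
    (fun σ (hσ : σ ⊆ K) => ?_) hz
  have hface : ∀ x ∈ σ, σ.erase x = K.erase v ↔ x = v ∧ σ = K := fun x hx => by
    refine ⟨fun h => ?_, by rintro ⟨rfl, rfl⟩; rfl⟩
    have hxv : x = v := by
      by_contra hne
      exact Finset.notMem_erase x σ (h ▸ Finset.mem_erase.2 ⟨hne, hσ hx⟩)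
    subst hxv
    exact ⟨rfl, by rw [← Finset.insert_erase hx, h, Finset.insert_erase hv]⟩
  simp only [LinearMap.comp_apply, boundary_simplex, Finsupp.lapply_apply, Finsupp.finsetSum_apply,
    Finsupp.single_apply]
  rw [Finset.sum_congr rfl fun x hx => if_congr (hface x hx) rfl rfl]
  by_cases hσK : σ = K
  · simp [hσK, hv]
  · simp [hσK]

/-- Sperner's lemma: `Z K` plays the role of the subdivided face of the simplex with vertex
set `K`. -/
lemma pushforward_apply_eq_one {f : X → Y} {Z : Finset Y → Chain X} {K₀ : Finset Y}
    (hempty : Z ∅ = simplex ∅)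
    (hbd : ∀ K ⊆ K₀, K.Nonempty → boundary (Z K) = ∑ k ∈ K, Z (K.erase k))
    (hlabel : ∀ K ⊆ K₀, Z K ∈ chainsIn {σ | σ.image f ⊆ K}) :
    pushforward f (Z K₀) K₀ = 1 := by
  induction K₀ using Finset.strongInduction with
  | H K ih =>
    have hface : ∀ L ⊆ K, pushforward f (Z L) ∈ chainsIn {σ | σ ⊆ L} := fun L hL =>
      pushforward_mem_chainsIn (fun σ hσ => hσ) (hlabel L hL)
    rcases K.eq_empty_or_nonempty with rfl | ⟨v, hv⟩
    · simp [hempty, pushforward_simplex_of_injOn]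
    · have hsub := Finset.erase_subset v K
      rw [← boundary_apply_erase (hface K subset_rfl) hv, boundary_pushforward,
        hbd K subset_rfl ⟨v, hv⟩, map_sum, Finsupp.finsetSum_apply,
        Finset.sum_eq_single_of_mem v hv fun k hk hkv => ?_]
      · exact ih _ (Finset.erase_ssubset hv) (fun L hL => hbd L (hL.trans hsub))
          fun L hL => hlabel L (hL.trans hsub)
      · refine Finsupp.notMem_support_iff.1 fun hmem => ?_
        have hle : K.erase v ⊆ K.erase k :=
          (Finsupp.mem_supported _ _).1 (hface _ (Finset.erase_subset k K)) hmem
        exact Finset.notMem_erase k K (hle (Finset.mem_erase.2 ⟨hkv, hk⟩))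

lemma exists_image_eq_of_boundary_eq_sum {f : X → Y} {S : Set (Finset X)} {Z : Finset Y → Chain X}
    {K₀ : Finset Y} (hempty : Z ∅ = simplex ∅)
    (hbd : ∀ K ⊆ K₀, K.Nonempty → boundary (Z K) = ∑ k ∈ K, Z (K.erase k))
    (hlabel : ∀ K ⊆ K₀, Z K ∈ chainsIn {σ | σ.image f ⊆ K}) (hZ : Z K₀ ∈ chainsIn S) :
    ∃ σ ∈ S, σ.image f = K₀ :=
  exists_image_eq_of_pushforward_apply_ne_zero hZ
    (by rw [pushforward_apply_eq_one hempty hbd hlabel]; exact one_ne_zero)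

end Chains

/-! ### Barycentric subdivision and a Knaster–Kuratowski–Mazurkiewicz theorem -/

section Subdivision

variable {X Y : Type*} [DecidableEq X] [DecidableEq Y]

/-- The barycentric subdivision of a simplex, the barycentre of a face `σ` being `b σ`. -/
def subdivideSimplex (b : Finset X → Y) (σ : Finset X) : Chain Y :=
  if σ = ∅ then simplex ∅ else cone (b σ) (∑ x : σ, subdivideSimplex b (σ.erase x))
termination_by σ.card
decreasing_by exact Finset.card_erase_lt_of_mem x.2

/-- The subdivision operator on chains. -/
def subdivide (b : Finset X → Y) : Chain X →ₗ[ZMod 2] Chain Y :=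
  Finsupp.linearCombination (ZMod 2) (subdivideSimplex b)

@[simp]
lemma subdivide_simplex_empty (b : Finset X → Y) : subdivide b (simplex ∅) = simplex ∅ := by
  simp [subdivide, subdivideSimplex]

lemma subdivide_simplex (b : Finset X → Y) {σ : Finset X} (hσ : σ.Nonempty) :
    subdivide b (simplex σ) = cone (b σ) (subdivide b (boundary (simplex σ))) := by
  rw [boundary_simplex, ← Finset.sum_coe_sort σ fun x => simplex (σ.erase x), map_sum]
  simp only [subdivide, Finsupp.linearCombination_single, one_smul]
  rw [subdivideSimplex, if_neg hσ.ne_empty]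

lemma boundary_subdivide (b : Finset X → Y) (z : Chain X) :
    boundary (subdivide b z) = subdivide b (boundary z) := by
  suffices boundary ∘ₗ subdivide b = subdivide b ∘ₗ boundary from LinearMap.congr_fun this z
  refine linearMap_ext fun σ => ?_
  simp only [LinearMap.comp_apply]
  induction σ using Finset.strongInduction with
  | H σ ih =>
    rcases σ.eq_empty_or_nonempty with rfl | hσ
    · simp
    · have hcycle : boundary (subdivide b (boundary (simplex σ))) = 0 := by
        rw [← map_zero (subdivide b), ← boundary_boundary (simplex σ), boundary_simplex]
        simp only [map_sum]
        exact Finset.sum_congr rfl fun x hx => ih _ (Finset.erase_ssubset hx)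
      rw [subdivide_simplex b hσ, boundary_cone, hcycle, map_zero, add_zero]

end Subdivision

section Metric

variable {E : Type*} [PseudoMetricSpace E]

/-- The simplices in `C` with at most `N` vertices and edges of length at most `δ`. -/
def smallSimplices (C : Set E) (N : ℕ) (δ : ℝ) : Set (Finset E) :=
  {σ | (σ : Set E) ⊆ C ∧ σ.card ≤ N ∧ ∀ x ∈ σ, ∀ y ∈ σ, dist x y ≤ δ}

lemma smallSimplices_mono {C C' : Set E} {N N' : ℕ} {δ δ' : ℝ} (hC : C ⊆ C') (hN : N ≤ N')
    (hδ : δ ≤ δ') : smallSimplices C N δ ⊆ smallSimplices C' N' δ' :=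
  fun _ hσ => ⟨hσ.1.trans hC, hσ.2.1.trans hN, fun x hx y hy => (hσ.2.2 x hx y hy).trans hδ⟩

lemma exists_forall_le_of_close_minimizers {κ : Type*} [Nonempty κ] {C : Set E}
    (hC : IsCompact C) {f : κ → E → ℝ}
    (hf : ∀ k, Continuous (f k))
    (h : ∀ ε > 0, ∃ q : κ → E, (∀ k, q k ∈ C) ∧ (∀ k k', f k (q k) ≤ f k' (q k)) ∧
      ∀ k k', dist (q k) (q k') ≤ ε) : ∃ p ∈ C, ∀ k k', f k p ≤ f k' p := by
  choose q hqC hqmin hqdist using fun m : ℕ => h (1 / (m + 1)) Nat.one_div_pos_of_nat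
  obtain ⟨k₀⟩ := ‹Nonempty κ›
  obtain ⟨p, hp, φ, hφ, hlim⟩ := hC.tendsto_subseq fun m => hqC m k₀
  have hlim' : ∀ k, Filter.Tendsto (fun m => q (φ m) k) Filter.atTop (nhds p) := fun k =>
    (tendsto_iff_of_dist (squeeze_zero (fun _ => dist_nonneg) (fun m => hqdist (φ m) k₀ k)
      (tendsto_one_div_add_atTop_nhds_zero_nat.comp hφ.tendsto_atTop))).1 hlim
  exact ⟨p, hp, fun k k' => le_of_tendsto_of_tendsto' (((hf k).tendsto p).comp (hlim' k))
    (((hf k').tendsto p).comp (hlim' k)) fun m => hqmin (φ m) k k'⟩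

end Metric

section KKM

variable {E : Type*} [NormedAddCommGroup E] [NormedSpace ℝ E]

/-- The barycentre of a finite set of points. -/
abbrev barycenter (σ : Finset E) : E := σ.centerMass (fun _ => (1 : ℝ)) id

lemma barycenter_mem_convexHull {σ : Finset E} (hσ : σ.Nonempty) :
    barycenter σ ∈ convexHull ℝ (σ : Set E) :=
  σ.centerMass_mem_convexHull (fun _ _ => zero_le_one) (by simpa using hσ.card_pos) fun _ hx => hx

lemma dist_barycenter_le_of_mem {σ : Finset E} {N : ℕ} (hN : σ.card ≤ N + 1) {δ : ℝ} (hδ : 0 ≤ δ)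
    (hdist : ∀ x ∈ σ, ∀ y ∈ σ, dist x y ≤ δ) {y : E} (hy : y ∈ σ) :
    dist y (barycenter σ) ≤ (N / (N + 1) : ℝ) * δ := by
  classical
  have hcard : (0 : ℝ) < σ.card := by exact_mod_cast Finset.card_pos.2 ⟨y, hy⟩
  have hdiff : y - barycenter σ = (σ.card : ℝ)⁻¹ • ∑ x ∈ σ.erase y, (y - x) := by
    rw [Finset.sum_erase σ (sub_self y), Finset.sum_sub_distrib, smul_sub, Finset.sum_const,
      ← Nat.cast_smul_eq_nsmul ℝ, inv_smul_smul₀ hcard.ne']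
    simp [Finset.centerMass]
  have hsum : ‖∑ x ∈ σ.erase y, (y - x)‖ ≤ (σ.card - 1 : ℝ) * δ := by
    refine (norm_sum_le_of_le _ fun x hx => ?_).trans_eq (b := ∑ _x ∈ σ.erase y, δ) ?_
    · rw [← dist_eq_norm]
      exact hdist y hy x (Finset.mem_of_mem_erase hx)
    · rw [Finset.sum_const, nsmul_eq_mul, Finset.cast_card_erase_of_mem hy]
  have hratio : (σ.card : ℝ)⁻¹ * (σ.card - 1 : ℝ) ≤ N / (N + 1) := by
    have : (σ.card : ℝ) ≤ N + 1 := by exact_mod_cast hN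
    rw [inv_mul_eq_div, div_le_div_iff₀ hcard (by positivity)]
    linarith
  calc dist y (barycenter σ)
      = (σ.card : ℝ)⁻¹ * ‖∑ x ∈ σ.erase y, (y - x)‖ := by
        rw [dist_eq_norm, hdiff, norm_smul, norm_inv, Real.norm_natCast]
    _ ≤ (σ.card : ℝ)⁻¹ * ((σ.card - 1 : ℝ) * δ) := by gcongr
    _ = ((σ.card : ℝ)⁻¹ * (σ.card - 1 : ℝ)) * δ := by ring
    _ ≤ (N / (N + 1) : ℝ) * δ := by gcongr

lemma dist_barycenter_le {σ : Finset E} {N : ℕ} (hN : σ.card ≤ N + 1) {δ : ℝ} (hδ : 0 ≤ δ)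
    (hdist : ∀ x ∈ σ, ∀ y ∈ σ, dist x y ≤ δ) {y : E} (hy : y ∈ convexHull ℝ (σ : Set E)) :
    dist y (barycenter σ) ≤ (N / (N + 1) : ℝ) * δ :=
  convexHull_min (t := Metric.closedBall (barycenter σ) ((N / (N + 1) : ℝ) * δ))
    (fun _ hx => dist_barycenter_le_of_mem hN hδ hdist hx) (convex_closedBall _ _) hy

variable [DecidableEq E]

lemma subdivide_simplex_mem_smallSimplices {N : ℕ} {δ : ℝ} (hδ : 0 ≤ δ) {σ : Finset E}
    (hN : σ.card ≤ N + 1) (hdist : ∀ x ∈ σ, ∀ y ∈ σ, dist x y ≤ δ) :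
    subdivide barycenter (simplex σ) ∈
      chainsIn (smallSimplices (convexHull ℝ σ) σ.card (N / (N + 1) * δ)) := by
  induction σ using Finset.strongInduction with
  | H σ ih =>
    rcases σ.eq_empty_or_nonempty with rfl | hσ
    · rw [subdivide_simplex_empty]
      exact simplex_mem_chainsIn (by simp [smallSimplices])
    have hfaces : subdivide barycenter (boundary (simplex σ)) ∈
        chainsIn (smallSimplices (convexHull ℝ σ) (σ.card - 1) (N / (N + 1) * δ)) := by
      rw [boundary_simplex, map_sum]
      refine Submodule.sum_mem _ fun x hx => ?_
      have hsub := Finset.erase_subset x σ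
      refine Finsupp.supported_mono (smallSimplices_mono (convexHull_mono ?_) ?_ le_rfl)
        (ih _ (Finset.erase_ssubset hx) ((Finset.card_le_card hsub).trans hN)
          fun y hy z hz => hdist y (hsub hy) z (hsub hz))
      · exact_mod_cast hsub
      · rw [Finset.card_erase_of_mem hx]
    rw [subdivide_simplex _ hσ]
    refine cone_mem_chainsIn (fun τ hτ => ?_) hfaces
    have hcenter : ∀ y ∈ τ, dist y (barycenter σ) ≤ N / (N + 1) * δ := fun y hy =>
      dist_barycenter_le hN hδ hdist (hτ.1 hy)
    refine ⟨?_, (Finset.card_insert_le _ _).trans ?_, ?_⟩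
    · rw [Finset.coe_insert]
      exact Set.insert_subset (barycenter_mem_convexHull hσ) hτ.1
    · have := hτ.2.1
      have := hσ.card_pos
      omega
    · simp only [Finset.forall_mem_insert, dist_self]
      exact ⟨⟨by positivity, fun y hy => dist_comm y (barycenter σ) ▸ hcenter y hy⟩,
        fun x hx => ⟨hcenter x hx, hτ.2.2 x hx⟩⟩

lemma subdivide_pow_mem_smallSimplices {N : ℕ} {δ : ℝ} (hδ : 0 ≤ δ) {C : Set E} (hC : Convex ℝ C)
    {z : Chain E} (hz : z ∈ chainsIn (smallSimplices C (N + 1) δ)) (m : ℕ) :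
    (subdivide barycenter ^ m : Module.End _ _) z ∈
      chainsIn (smallSimplices C (N + 1) ((N / (N + 1)) ^ m * δ)) := by
  induction m with
  | zero => simpa using hz
  | succ m ih =>
    rw [pow_succ' (subdivide barycenter), Module.End.mul_apply]
    refine apply_mem_of_mem_chainsIn _ _ (fun σ hσ => ?_) ih
    rw [pow_succ', mul_assoc]
    exact Finsupp.supported_mono (smallSimplices_mono (convexHull_min hσ.1 hC) hσ.2.1 le_rfl)
      (subdivide_simplex_mem_smallSimplices (by positivity) hσ.2.1 hσ.2.2)

lemma exists_subdivide_pow_mem_smallSimplices {S : Set (Finset E)} (hS : S.Finite) {ε : ℝ}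
    (hε : 0 < ε) : ∃ m N : ℕ, ∀ σ ∈ S, (subdivide barycenter ^ m : Module.End _ _) (simplex σ) ∈
      chainsIn (smallSimplices (convexHull ℝ σ) N ε) := by
  set V : Finset E := hS.toFinset.biUnion id
  set c : ℝ := V.card / (V.card + 1)
  have hc : c < 1 := by rw [div_lt_one (by positivity)]; linarith
  have hlim : Filter.Tendsto (fun m => c ^ m * Metric.diam (V : Set E)) Filter.atTop (nhds 0) := by
    simpa using (tendsto_pow_atTop_nhds_zero_of_lt_one (by positivity) hc).mul_const _
  obtain ⟨m, hm⟩ := (hlim.eventually_le_const hε).exists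
  refine ⟨m, V.card + 1, fun σ hσ => ?_⟩
  have hσV : σ ⊆ V := Finset.subset_biUnion_of_mem id (hS.mem_toFinset.2 hσ)
  have hmem : σ ∈ smallSimplices (convexHull ℝ σ) (V.card + 1) (Metric.diam (V : Set E)) :=
    ⟨subset_convexHull ℝ _, (Finset.card_le_card hσV).trans (Nat.le_succ _), fun x hx y hy =>
      Metric.dist_le_diam_of_mem V.finite_toSet.isBounded (hσV hx) (hσV hy)⟩
  exact Finsupp.supported_mono (smallSimplices_mono subset_rfl le_rfl hm)
    (subdivide_pow_mem_smallSimplices Metric.diam_nonneg (convex_convexHull ℝ _)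
      (simplex_mem_chainsIn hmem) m)

variable {κ : Type*} [Fintype κ] [Nonempty κ] [DecidableEq κ]

lemma exists_close_minimizers {Z : Finset κ → Chain E} {S : Finset κ → Set (Finset E)}
    (hempty : Z ∅ = simplex ∅)
    (hbd : ∀ K : Finset κ, K.Nonempty → boundary (Z K) = ∑ k ∈ K, Z (K.erase k))
    (hZ : ∀ K, Z K ∈ chainsIn (S K)) (hfin : ∀ K, (S K).Finite) {f : κ → E → ℝ}
    (hlabel : ∀ K, ∀ σ ∈ S K, ∀ p ∈ convexHull ℝ (σ : Set E), ∀ k ∉ K, ∃ k', f k' p < f k p)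
    {ε : ℝ} (hε : 0 < ε) :
    ∃ σ ∈ S Finset.univ, ∃ q : κ → E, (∀ k, q k ∈ convexHull ℝ (σ : Set E)) ∧
      (∀ k k', f k (q k) ≤ f k' (q k)) ∧ ∀ k k', dist (q k) (q k') ≤ ε := by
  obtain ⟨m, N, hsmall⟩ := exists_subdivide_pow_mem_smallSimplices
    (Set.finite_iUnion hfin) hε
  have hmem : ∀ K, (subdivide barycenter ^ m : Module.End _ _) (Z K) ∈
      chainsIn (⋃ σ ∈ S K, smallSimplices (convexHull ℝ (σ : Set E)) N ε) := fun K =>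
    apply_mem_of_mem_chainsIn _ _ (fun σ hσ => Finsupp.supported_mono
      (Set.subset_biUnion_of_mem
        (u := fun σ : Finset E => smallSimplices (convexHull ℝ (σ : Set E)) N ε) hσ)
      (hsmall σ (Set.mem_iUnion_of_mem K hσ))) (hZ K)
  have hcomm : Commute boundary (subdivide barycenter ^ m : Module.End (ZMod 2) (Chain E)) :=
    Commute.pow_right (LinearMap.ext fun z => boundary_subdivide _ z) m
  choose label hmin using fun p : E => Finite.exists_min fun k => f k p
  obtain ⟨τ, hτ, himage⟩ := exists_image_eq_of_boundary_eq_sum (f := label) (K₀ := Finset.univ)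
    (Z := fun K => (subdivide barycenter ^ m : Module.End _ _) (Z K))
    (by
      rw [hempty, Module.End.pow_apply]
      exact Function.iterate_fixed (subdivide_simplex_empty _) m)
    (fun K _ hK => by
      rw [← map_sum, ← hbd K hK]
      exact LinearMap.congr_fun hcomm (Z K))
    (fun K _ => Finsupp.supported_mono (fun τ hτ => by
      obtain ⟨σ, hσ, hτ⟩ := Set.mem_iUnion₂.1 hτ
      refine Finset.image_subset_iff.2 fun x hx => by_contra fun hxK => ?_
      obtain ⟨k', hk'⟩ := hlabel K σ hσ x (hτ.1 hx) _ hxK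
      exact (hmin x k').not_gt hk') (hmem K)) (hmem Finset.univ)
  obtain ⟨σ, hσ, hτ⟩ := Set.mem_iUnion₂.1 hτ
  choose q hqτ hq using fun k => Finset.mem_image.1 (himage ▸ Finset.mem_univ k)
  exact ⟨σ, hσ, q, fun k => hτ.1 (hqτ k), fun k k' => by simpa only [hq] using hmin (q k) k',
    fun k k' => hτ.2.2 _ (hqτ k) _ (hqτ k')⟩

theorem exists_forall_le_of_boundary_eq_sum {Z : Finset κ → Chain E}
    {S : Finset κ → Set (Finset E)} (hempty : Z ∅ = simplex ∅)
    (hbd : ∀ K : Finset κ, K.Nonempty → boundary (Z K) = ∑ k ∈ K, Z (K.erase k))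
    (hZ : ∀ K, Z K ∈ chainsIn (S K)) (hfin : ∀ K, (S K).Finite) {f : κ → E → ℝ}
    (hf : ∀ k, Continuous (f k))
    (hlabel : ∀ K, ∀ σ ∈ S K, ∀ p ∈ convexHull ℝ (σ : Set E), ∀ k ∉ K, ∃ k', f k' p < f k p) :
    ∃ σ ∈ S Finset.univ, ∃ p ∈ convexHull ℝ (σ : Set E), ∀ k k', f k p ≤ f k' p := by
  have hcompact : IsCompact (⋃ σ ∈ S Finset.univ, convexHull ℝ (σ : Set E)) :=
    (hfin _).isCompact_biUnion fun σ _ => σ.finite_toSet.isCompact_convexHull ℝ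
  obtain ⟨p, hp, hmin⟩ := exists_forall_le_of_close_minimizers hcompact hf fun ε hε => by
    obtain ⟨σ, hσ, q, hqσ, hq⟩ := exists_close_minimizers hempty hbd hZ hfin hlabel hε
    exact ⟨q, fun k => Set.mem_biUnion hσ (hqσ k), hq⟩
  obtain ⟨σ, hσ, hpσ⟩ := Set.mem_iUnion₂.1 hp
  exact ⟨σ, hσ, p, hpσ, hmin⟩

end KKM
/-! ### Refinement as passing to the minimizers of a function -/

section Minimizers

/-- The elements of `s` at which `h` attains its minimum over `s`. Entrywise, these are exactly the
refinements with respect to ordered partitions, the blocks being the level sets of `h`. -/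
def minimizers {α β : Type*} [LinearOrder β] (h : α → β) (s : Finset α) : Finset α :=
  {a ∈ s | ∀ b ∈ s, h a ≤ h b}

variable {α β : Type*} [LinearOrder β] {h : α → β} {s : Finset α} {a : α}

lemma mem_minimizers : a ∈ minimizers h s ↔ a ∈ s ∧ ∀ b ∈ s, h a ≤ h b := by
  simp [minimizers]

lemma minimizers_subset (h : α → β) (s : Finset α) : minimizers h s ⊆ s :=
  Finset.filter_subset _ _

@[simp]
lemma minimizers_empty (h : α → β) : minimizers h ∅ = ∅ :=
  Finset.filter_empty _

lemma minimizers_nonempty (h : α → β) (hs : s.Nonempty) : (minimizers h s).Nonempty := by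
  obtain ⟨a, ha, hmin⟩ := s.exists_min_image h hs
  exact ⟨a, mem_minimizers.2 ⟨ha, hmin⟩⟩

lemma minimizers_congr {γ : Type*} [LinearOrder γ] {g : α → γ}
    (hgh : ∀ a ∈ s, ∀ b ∈ s, g a ≤ g b ↔ h a ≤ h b) : minimizers g s = minimizers h s :=
  Finset.filter_congr fun a ha => forall₂_congr fun b hb => hgh a ha b hb

lemma exists_int_le_iff_le [Finite α] (f : α → β) : ∃ g : α → ℤ, ∀ a b, g a ≤ g b ↔ f a ≤ f b := by
  classical
  have := Fintype.ofFinite α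
  refine ⟨fun a => Finset.card {b | f b < f a}, fun a b => ?_⟩
  rw [Nat.cast_le]
  refine ⟨fun hab => ?_, fun hab => Finset.card_le_card fun c => by
    simpa using fun hc => lt_of_lt_of_le hc hab⟩
  by_contra! hba
  refine hab.not_gt (Finset.card_lt_card ⟨fun c => ?_, fun hsub => ?_⟩)
  · simpa using fun hc => lt_trans hc hba
  · simpa using @hsub b (by simpa using hba)

lemma exists_minimizers_comp {γ : Type*} [LinearOrder γ] [Finite α] (h : α → β) (h' : α → γ) :
    ∃ g : α → ℤ, ∀ s, minimizers h' (minimizers h s) = minimizers g s := by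
  obtain ⟨g, hg⟩ := exists_int_le_iff_le fun a => toLex (h a, h' a)
  refine ⟨g, fun s => ?_⟩
  ext a
  simp only [mem_minimizers, hg, Prod.Lex.toLex_le_toLex]
  constructor
  · rintro ⟨⟨ha, hmin⟩, hmin'⟩
    refine ⟨ha, fun b hb => (hmin b hb).lt_or_eq.imp_right fun hab => ⟨hab, hmin' b ⟨hb, ?_⟩⟩⟩
    exact fun c hc => hab ▸ hmin c hc
  · rintro ⟨ha, hmin⟩
    have hle : ∀ b ∈ s, h a ≤ h b := fun b hb => (hmin b hb).elim le_of_lt fun hab => hab.1.le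
    refine ⟨⟨ha, hle⟩, fun b ⟨hb, hmin_b⟩ => ?_⟩
    exact ((hmin b hb).resolve_left (hmin_b a ha).not_gt).2

end Minimizers

section RefineEntry

variable {α : Type*} [DecidableEq α]

lemma mem_foldr_union {a : α} {P : List (Finset α)} :
    a ∈ P.foldr (· ∪ ·) ∅ ↔ ∃ p ∈ P, a ∈ p := by
  induction P with
  | nil => simp
  | cons p P ih => simp [ih]

lemma refineEntry_eq_minimizers {P : List (Finset α)} {s : Finset α}
    (hs : s ⊆ P.foldr (· ∪ ·) ∅) :
    refineEntry s P = minimizers (fun a => P.findIdx (a ∈ ·)) s := by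
  induction P with
  | nil => simp_all [refineEntry]
  | cons p P ih =>
    simp only [refineEntry]
    split_ifs with hp
    · obtain ⟨b, hb⟩ := hp
      rw [Finset.mem_inter] at hb
      ext a
      simp only [Finset.mem_inter, mem_minimizers, List.findIdx_cons]
      refine and_congr_right fun _ => ⟨fun hap c _ => by simp [hap], fun hmin => ?_⟩
      by_contra hap
      simpa [hap, hb.2] using hmin b hb.1
    · have hsp : ∀ a ∈ s, a ∉ p := fun a ha hap => hp ⟨a, Finset.mem_inter.2 ⟨ha, hap⟩⟩
      rw [ih fun a ha => (Finset.mem_union.1 (hs ha)).resolve_left (hsp a ha)]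
      exact minimizers_congr fun a ha b hb => by simp [List.findIdx_cons, hsp a ha, hsp b hb]

lemma exists_orderedPartition_refineEntry_eq [Fintype α] {β : Type*} [LinearOrder β] (h : α → β) :
    ∃ P : List (Finset α), IsOrderedPartition P ∧ ∀ s, refineEntry s P = minimizers h s := by
  set levels := (Finset.univ.image h).sort with hlevels
  have hsorted : levels.SortedLT := Finset.sortedLT_sort _
  have hmem (a : α) : h a ∈ levels := by simp [hlevels]
  set P := levels.map fun v => ({a | h a = v} : Finset α) with hP
  have hcover : P.foldr (· ∪ ·) ∅ = Finset.univ := by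
    refine Finset.eq_univ_iff_forall.2 fun a => mem_foldr_union.2 ?_
    exact ⟨_, List.mem_map_of_mem (hmem a), by simp⟩
  refine ⟨P, ⟨fun p hp => ?_, ?_, hcover⟩, fun s => ?_⟩
  · obtain ⟨v, hv, rfl⟩ := List.mem_map.1 hp
    obtain ⟨a, rfl⟩ : ∃ a, h a = v := by simpa [hlevels] using hv
    exact ⟨a, by simp⟩
  · refine List.pairwise_map.2 (hsorted.pairwise.imp fun {v w} hvw => ?_)
    exact Finset.disjoint_filter.2 fun a _ hv hw => hvw.ne (hv.symm.trans hw)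
  · rw [refineEntry_eq_minimizers (hcover ▸ Finset.subset_univ s)]
    refine minimizers_congr fun a _ b _ => ?_
    have hidx (a : α) : P.findIdx (a ∈ ·) = levels.idxOf (h a) := by
      simp only [hP, List.findIdx_map, List.idxOf]
      congr 1; ext v; simp [eq_comm, beq_eq_decide]
    rw [hidx, hidx, ← hsorted.getElem_le_getElem_iff (hi := List.idxOf_lt_length_of_mem (hmem a))
      (hj := List.idxOf_lt_length_of_mem (hmem b)), List.getElem_idxOf, List.getElem_idxOf]

end RefineEntry

/-! ### Compatible types -/

section Compatible

/-- Weight certificate for the acyclicity of `Γ(A,B)`: the columns `k` and the rows `i` carry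
integers such that in each row the columns of `B` lie weakly below the row and those of `A` weakly
above it, and a column on the level of the row belongs to both types or to none. Unlike acyclicity,
this condition is visibly symmetric and invariant under duality. -/
def Compatible {ι κ : Type*} (A B : ι → Finset κ) : Prop :=
  ∃ (ξ : κ → ℤ) (μ : ι → ℤ),
    (∀ i, ∀ k ∈ A i, μ i ≤ ξ k ∧ (μ i = ξ k → k ∈ B i)) ∧
    (∀ i, ∀ k ∈ B i, ξ k ≤ μ i ∧ (ξ k = μ i → k ∈ A i))

variable {ι κ : Type*} {A B : ι → Finset κ}

lemma Compatible.of_linearOrder [Finite ι] [Finite κ] {β : Type*} [LinearOrder β]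
    (ξ : κ → β) (μ : ι → β) (hA : ∀ i, ∀ k ∈ A i, μ i ≤ ξ k ∧ (μ i = ξ k → k ∈ B i))
    (hB : ∀ i, ∀ k ∈ B i, ξ k ≤ μ i ∧ (ξ k = μ i → k ∈ A i)) : Compatible A B := by
  obtain ⟨g, hg⟩ := exists_int_le_iff_le (Sum.elim μ ξ)
  refine ⟨g ∘ Sum.inr, g ∘ Sum.inl, fun i k hk => ⟨?_, fun h => (hA i k hk).2 ?_⟩,
    fun i k hk => ⟨?_, fun h => (hB i k hk).2 ?_⟩⟩
  · exact (hg (.inl i) (.inr k)).2 (hA i k hk).1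
  · exact le_antisymm (hA i k hk).1 ((hg (.inr k) (.inl i)).1 h.ge)
  · exact (hg (.inr k) (.inl i)).2 (hB i k hk).1
  · exact le_antisymm (hB i k hk).1 ((hg (.inl i) (.inr k)).1 h.ge)

lemma Compatible.symm (h : Compatible A B) : Compatible B A := by
  obtain ⟨ξ, μ, hA, hB⟩ := h
  refine ⟨-ξ, -μ, fun i k hk => ?_, fun i k hk => ?_⟩
  · exact ⟨neg_le_neg (hB i k hk).1, fun h => (hB i k hk).2 (neg_injective h).symm⟩
  · exact ⟨neg_le_neg (hA i k hk).1, fun h => (hA i k hk).2 (neg_injective h).symm⟩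

lemma exists_eq_iff_mem_minimizers (g : κ → ℤ) (s : Finset κ) :
    ∃ m : ℤ, ∀ k ∈ s, m ≤ g k ∧ (m = g k ↔ k ∈ minimizers g s) := by
  rcases s.eq_empty_or_nonempty with rfl | hs
  · simp
  · obtain ⟨k₀, hk₀, hmin⟩ := s.exists_min_image g hs
    refine ⟨g k₀, fun k hk => ⟨hmin k hk, fun h => ?_, fun hk' => ?_⟩⟩
    · exact mem_minimizers.2 ⟨hk, h ▸ hmin⟩
    · exact le_antisymm (hmin k hk) ((mem_minimizers.1 hk').2 k₀ hk₀)

lemma Compatible.minimizers_left [Finite ι] [Finite κ] (h : Compatible A B) (g : κ → ℤ) :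
    Compatible (fun i => minimizers g (A i)) B := by
  obtain ⟨ξ, μ, hA, hB⟩ := h
  choose m hm using fun i => exists_eq_iff_mem_minimizers g (A i)
  refine .of_linearOrder (fun k => toLex (ξ k, -g k)) (fun i => toLex (μ i, -m i))
    (fun i k hk => ?_) (fun i k hk => ?_)
  · have hkA := minimizers_subset _ _ hk
    have := hA i k hkA
    rw [Prod.Lex.toLex_le_toLex, EmbeddingLike.apply_eq_iff_eq, Prod.mk.injEq]
    exact ⟨this.1.lt_or_eq.imp_right fun h => ⟨h, by simpa using ((hm i k hkA).2.2 hk).ge⟩,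
      fun h => this.2 h.1⟩
  · have := hB i k hk
    rw [Prod.Lex.toLex_le_toLex, EmbeddingLike.apply_eq_iff_eq, Prod.mk.injEq]
    exact ⟨this.1.lt_or_eq.imp_right fun h => ⟨h, neg_le_neg (hm i k (this.2 h)).1⟩,
      fun h => (hm i k (this.2 h.1)).2.1 (neg_injective h.2).symm⟩

end Compatible

section CompAcyclic

variable {n d : ℕ} {A B : Fin n → Finset (Fin d)}

lemma Compatible.compAcyclic (h : Compatible A B) : CompAcyclic A B := by
  obtain ⟨ξ, μ, hA, hB⟩ := h
  have hreach : ∀ {j k}, Relation.ReflTransGen (CompStep A B) j k → ξ k ≤ ξ j := by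
    intro j k hjk
    induction hjk with
    | refl => exact le_rfl
    | tail _ hstep ih =>
      obtain ⟨i, hj, hk, -⟩ := hstep
      exact (hB i _ hk).1.trans ((hA i _ hj).1.trans ih)
  rintro ⟨j, k, ⟨i, hj, hk, -, hdir⟩, hkj⟩
  have hjk := hreach hkj
  exact hdir ⟨(hA i j hj).2 ((hA i j hj).1.antisymm (hjk.trans (hB i k hk).1)),
    (hB i k hk).2 ((hB i k hk).1.antisymm ((hA i j hj).1.trans hjk))⟩

/-- The number of columns reachable in `Γ(A,B)` decreases along the edges, strictly so along the
directed ones. -/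
lemma exists_rank_of_compAcyclic (h : CompAcyclic A B) :
    ∃ r : Fin d → ℕ, ∀ i, ∀ j ∈ A i, ∀ k ∈ B i,
      r k ≤ r j ∧ (r k = r j → j ∈ B i ∧ k ∈ A i) := by
  classical
  let reach (k : Fin d) : Finset (Fin d) := {j | Relation.ReflTransGen (CompStep A B) k j}
  have hreach (i j k) (hj : j ∈ A i) (hk : k ∈ B i) : reach k ⊆ reach j := by
    by_cases hjk : j = k
    · rw [hjk]
    · simpa [reach, Finset.subset_iff] using fun l => Relation.ReflTransGen.head ⟨i, hj, hk, hjk⟩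
  refine ⟨fun k => (reach k).card, fun i j hj k hk => ?_⟩
  refine ⟨Finset.card_le_card (hreach i j k hj hk), fun hcard => ?_⟩
  by_contra hdir
  have hjk : j ≠ k := fun hjk => hdir ⟨hjk ▸ hk, hjk ▸ hj⟩
  have hj_mem : j ∈ reach k := by
    rw [Finset.eq_of_subset_of_card_le (hreach i j k hj hk) hcard.ge]
    simp [reach, Relation.ReflTransGen.refl]
  exact h ⟨j, k, ⟨i, hj, hk, hjk, hdir⟩, by simpa [reach] using hj_mem⟩

lemma compatible_of_compAcyclic (h : CompAcyclic A B) : Compatible A B := by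
  obtain ⟨r, hr⟩ := exists_rank_of_compAcyclic h
  let level (i : Fin n) (k : Fin d) : ℕ := 2 * r k + 1 + if k ∈ A i then 0 else 1
  refine .of_linearOrder (fun k => 2 * r k + 1) (fun i => (B i).sup (level i))
    (fun i k hk => ⟨?_, fun hle => ?_⟩) (fun i k hk => ?_)
  · refine Finset.sup_le fun l hl => ?_
    have := hr i k hk l hl
    by_cases hlA : l ∈ A i <;> simp only [level, hlA, if_true, if_false] <;> grind
  · by_contra hkB
    refine hle.not_lt ((Finset.sup_lt_iff (by simp)).2 fun l hl => ?_)
    have := hr i k hk l hl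
    grind
  · have hle : level i k ≤ (B i).sup (level i) := Finset.le_sup hk
    grind

lemma mem_dualType {i : Fin n} {k : Fin d} : i ∈ dualType A k ↔ k ∈ A i := by
  simp [dualType]

lemma dualType_dualType (A : Fin n → Finset (Fin d)) : dualType (dualType A) = A := by
  ext i k
  simp [mem_dualType]

lemma Compatible.dualType (h : Compatible A B) : Compatible (dualType A) (dualType B) := by
  obtain ⟨ξ, μ, hA, hB⟩ := h
  refine ⟨-μ, -ξ, fun k i hi => ?_, fun k i hi => ?_⟩ <;> rw [mem_dualType] at hi ⊢
  · exact ⟨neg_le_neg (hA i k hi).1, fun h => (hA i k hi).2 (neg_injective h).symm⟩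
  · exact ⟨neg_le_neg (hB i k hi).1, fun h => (hB i k hi).2 (neg_injective h).symm⟩

end CompAcyclic

/-! ### Tropical oriented matroids on subsets of rows and columns -/

section RestrictRows

variable {ι κ : Type*} [DecidableEq ι]

/-- The type `A` with the entries outside the rows `R` emptied. -/
def restrictRows (R : Finset ι) (A : ι → Finset κ) : ι → Finset κ :=
  fun i => if i ∈ R then A i else ∅

variable {R : Finset ι} {A B : ι → Finset κ}

lemma mem_restrictRows {i : ι} {k : κ} : k ∈ restrictRows R A i ↔ i ∈ R ∧ k ∈ A i := by
  simp only [restrictRows]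
  split_ifs with hi <;> simp [hi]

lemma restrictRows_of_mem {i : ι} (hi : i ∈ R) : restrictRows R A i = A i := if_pos hi

lemma restrictRows_of_notMem {i : ι} (hi : i ∉ R) : restrictRows R A i = ∅ := if_neg hi

lemma Compatible.restrictRows (h : Compatible A B) :
    Compatible (restrictRows R A) (restrictRows R B) := by
  obtain ⟨ξ, μ, hA, hB⟩ := h
  simp only [Compatible, mem_restrictRows]
  exact ⟨ξ, μ, fun i k hk => ⟨(hA i k hk.2).1, fun h => ⟨hk.1, (hA i k hk.2).2 h⟩⟩,
    fun i k hk => ⟨(hB i k hk.2).1, fun h => ⟨hk.1, (hB i k hk.2).2 h⟩⟩⟩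

lemma minimizers_restrictRows (h : κ → ℤ) :
    (fun i => minimizers h (restrictRows R A i)) = restrictRows R fun i => minimizers h (A i) := by
  funext i
  simp only [restrictRows]
  split_ifs <;> simp

end RestrictRows

section IsTOMOn

variable {ι κ : Type*} [DecidableEq ι] [DecidableEq κ]

/-- A tropical oriented matroid with rows `R` and columns `K`; the entries in the remaining rows
are empty. Rows and columns are kept as subsets of fixed types because the induction on the number
of columns passes to both subsets of rows and subsets of columns. -/
structure IsTOMOn (R : Finset ι) (K : Finset κ) (M : Set (ι → Finset κ)) : Prop where
  subset : ∀ A ∈ M, ∀ i, A i ⊆ K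
  nonempty : ∀ A ∈ M, ∀ i ∈ R, (A i).Nonempty
  eq_empty : ∀ A ∈ M, ∀ i ∉ R, A i = ∅
  boundary : ∀ k ∈ K, (fun i => if i ∈ R then {k} else ∅) ∈ M
  compatible : ∀ A ∈ M, ∀ B ∈ M, Compatible A B
  elimination : ∀ A ∈ M, ∀ B ∈ M, ∀ j ∈ R, ∃ C ∈ M, C j = A j ∪ B j ∧
    ∀ i, C i = A i ∨ C i = B i ∨ C i = A i ∪ B i
  minimizers_mem : ∀ A ∈ M, ∀ h : κ → ℤ, (fun i => minimizers h (A i)) ∈ M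

lemma isTOMOn_of_isTOM {n d : ℕ} {M : Set (Fin n → Finset (Fin d))} (hM : IsTOM n d M) :
    IsTOMOn Finset.univ Finset.univ M := by
  obtain ⟨hne, hbdry, hcomp, helim, href⟩ := hM
  refine ⟨fun _ _ _ => Finset.subset_univ _, fun A hA i _ => hne A hA i,
    fun _ _ i hi => absurd (Finset.mem_univ i) hi, fun k _ => by simpa using hbdry k,
    fun A hA B hB => compatible_of_compAcyclic (hcomp A hA B hB),
    fun A hA B hB j _ => helim A hA B hB j, fun A hA h => ?_⟩
  obtain ⟨P, hP, hPh⟩ := exists_orderedPartition_refineEntry_eq h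
  have : refineType A P = fun i => minimizers h (A i) := funext fun i => hPh _
  exact this ▸ href A hA P hP

variable {R R' : Finset ι} {K K' : Finset κ} {M : Set (ι → Finset κ)} {A B : ι → Finset κ}

lemma IsTOMOn.restrict (hM : IsTOMOn R K M) (hR : R' ⊆ R) (hK : K' ⊆ K) :
    IsTOMOn R' K' {A | ∃ E ∈ M, (∀ i, E i ⊆ K') ∧ A = restrictRows R' E} where
  subset := by
    rintro _ ⟨E, -, hEK, rfl⟩ i k hk
    exact hEK i (mem_restrictRows.1 hk).2
  nonempty := by
    rintro _ ⟨E, hE, -, rfl⟩ i hi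
    exact restrictRows_of_mem (A := E) hi ▸ hM.nonempty E hE i (hR hi)
  eq_empty := by
    rintro _ ⟨E, -, -, rfl⟩ i hi
    exact restrictRows_of_notMem hi
  boundary k hk := by
    refine ⟨_, hM.boundary k (hK hk), fun i => ?_, funext fun i => ?_⟩
    · split_ifs <;> simp [hk]
    · by_cases hi : i ∈ R' <;> simp [restrictRows, hi, hR _]
  compatible := by
    rintro _ ⟨E, hE, -, rfl⟩ _ ⟨F, hF, -, rfl⟩
    exact (hM.compatible E hE F hF).restrictRows
  elimination := by
    rintro _ ⟨E, hE, hEK, rfl⟩ _ ⟨F, hF, hFK, rfl⟩ j hj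
    obtain ⟨C, hC, hCj, hCi⟩ := hM.elimination E hE F hF j (hR hj)
    refine ⟨_, ⟨C, hC, fun i => ?_, rfl⟩, ?_, fun i => ?_⟩
    · rcases hCi i with h | h | h <;> rw [h]
      exacts [hEK i, hFK i, Finset.union_subset (hEK i) (hFK i)]
    · simp only [restrictRows_of_mem hj, hCj]
    · by_cases hi : i ∈ R'
      · simpa only [restrictRows_of_mem hi] using hCi i
      · simp [restrictRows_of_notMem hi]
  minimizers_mem := by
    rintro _ ⟨E, hE, hEK, rfl⟩ h
    exact ⟨_, hM.minimizers_mem E hE h, fun i => (minimizers_subset _ _).trans (hEK i),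
      minimizers_restrictRows h⟩

lemma IsTOMOn.mem_of_le_of_compatible (hM : IsTOMOn R K M) (hB : B ∈ M) (hAB : A ≤ B)
    (hcomp : Compatible A B) (hne : ∀ i ∈ R, (A i).Nonempty) : A ∈ M := by
  obtain ⟨ξ, μ, hA, hB'⟩ := hcomp
  suffices A = fun i => minimizers (fun k => -ξ k) (B i) from this ▸ hM.minimizers_mem B hB _
  funext i
  by_cases hi : i ∈ R
  · obtain ⟨a, ha⟩ := hne i hi
    ext k
    simp only [mem_minimizers, neg_le_neg_iff]
    refine ⟨fun hk => ⟨hAB i hk, fun l hl => (hB' i l hl).1.trans (hA i k hk).1⟩, ?_⟩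
    rintro ⟨hk, hmax⟩
    exact (hB' i k hk).2 ((hB' i k hk).1.antisymm ((hA i a ha).1.trans (hmax a (hAB i ha))))
  · have hBi := hM.eq_empty B hB i hi
    rw [hBi, minimizers_empty]
    exact Finset.subset_empty.1 (hBi ▸ hAB i)

/-- Tropical oriented matroids with rows `R` and columns `K` are maximal: every type compatible
with all members is a member. -/
def Saturated (R : Finset ι) (K : Finset κ) : Prop :=
  ∀ M : Set (ι → Finset κ), IsTOMOn R K M → ∀ A : ι → Finset κ, (∀ i, A i ⊆ K) →
    (∀ i ∈ R, (A i).Nonempty) → (∀ i ∉ R, A i = ∅) → (∀ D ∈ M, Compatible A D) → A ∈ M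

end IsTOMOn
/-! ### Refinement by a family of sets of columns -/

section RefineBy

variable {ι κ : Type*} [DecidableEq κ]

/-- The refinement of `A` by a family `c` of sets of columns: every row meeting a member of `c` is
cut down to that member. For a chain `U₁ ⊂ ⋯ ⊂ Uᵣ` this is the refinement with respect to the
ordered partition `(U₁, U₂ \ U₁, …, Uᵣᶜ)`. -/
def refineBy (c : Finset (Finset κ)) (A : ι → Finset κ) : ι → Finset κ :=
  fun i => {k ∈ A i | ∀ U ∈ c, (A i ∩ U).Nonempty → k ∈ U}

variable {c c' : Finset (Finset κ)} {A : ι → Finset κ} {S U : Finset κ} {i : ι} {k : κ}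

lemma mem_refineBy :
    k ∈ refineBy c A i ↔ k ∈ A i ∧ ∀ U ∈ c, (A i ∩ U).Nonempty → k ∈ U := by
  simp [refineBy]

lemma mem_refineBy_singleton :
    k ∈ refineBy {U} A i ↔ k ∈ A i ∧ ((A i ∩ U).Nonempty → k ∈ U) := by
  simp [refineBy]

lemma refineBy_empty (A : ι → Finset κ) : refineBy ∅ A = A := by
  ext i k
  simp [mem_refineBy]

lemma refineBy_le (c : Finset (Finset κ)) (A : ι → Finset κ) : refineBy c A ≤ A :=
  fun _ => Finset.filter_subset _ _

lemma refineBy_anti (h : c ⊆ c') (A : ι → Finset κ) : refineBy c' A ≤ refineBy c A := by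
  intro i k hk
  rw [mem_refineBy] at hk ⊢
  exact ⟨hk.1, fun U hU => hk.2 U (h hU)⟩

lemma refineBy_insert (hU : ∀ W ∈ c, U ⊆ W ∨ W ⊆ U) (A : ι → Finset κ) :
    refineBy (insert U c) A = refineBy {U} (refineBy c A) := by
  ext i k
  simp only [mem_refineBy, Finset.forall_mem_insert, Finset.mem_singleton, forall_eq]
  constructor
  · rintro ⟨hk, hkU, hkc⟩
    exact ⟨⟨hk, hkc⟩, fun h => hkU (h.mono (Finset.inter_subset_inter_right (refineBy_le c A i)))⟩
  · rintro ⟨⟨hk, hkc⟩, hkU⟩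
    refine ⟨hk, fun ⟨x, hx⟩ => ?_, hkc⟩
    rw [Finset.mem_inter] at hx
    by_cases hxc : ∀ W ∈ c, (A i ∩ W).Nonempty → x ∈ W
    · exact hkU ⟨x, Finset.mem_inter.2 ⟨mem_refineBy.2 ⟨hx.1, hxc⟩, hx.2⟩⟩
    · push Not at hxc
      obtain ⟨W, hW, hWA, hxW⟩ := hxc
      exact (hU W hW).resolve_left (fun h => hxW (h hx.2)) (hkc W hW hWA)

lemma refineBy_singleton (U : Finset κ) (A : ι → Finset κ) :
    refineBy {U} A = fun i => minimizers (fun k => if k ∈ U then (0 : ℤ) else 1) (A i) := by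
  ext i k
  rw [mem_refineBy_singleton, mem_minimizers]
  refine and_congr_right fun _ => ⟨fun h l hl => ?_, fun h ⟨l, hl⟩ => ?_⟩
  · by_cases hlU : l ∈ U
    · simp [hlU, h ⟨l, Finset.mem_inter.2 ⟨hl, hlU⟩⟩]
    · simp only [hlU, if_false]
      split_ifs <;> simp
  · rw [Finset.mem_inter] at hl
    by_contra hkU
    simpa [hl.2, hkU] using h l hl.1

lemma refineBy_refineBy_singleton (hc : ∀ W ∈ c, W ⊆ S ∨ S ⊆ W) (hS : S ∈ c) (A : ι → Finset κ) :
    refineBy c (refineBy {S} A) = refineBy c A := by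
  ext i k
  rw [mem_refineBy, mem_refineBy_singleton, mem_refineBy]
  constructor
  · rintro ⟨⟨hk, hkS⟩, hkc⟩
    refine ⟨hk, fun W hW ⟨x, hx⟩ => ?_⟩
    rw [Finset.mem_inter] at hx
    by_cases hxS : (A i ∩ S).Nonempty → x ∈ S
    · exact hkc W hW ⟨x, Finset.mem_inter.2 ⟨mem_refineBy_singleton.2 ⟨hx.1, hxS⟩, hx.2⟩⟩
    · push Not at hxS
      exact (hc W hW).resolve_left (fun h => hxS.2 (h hx.2)) (hkS hxS.1)
  · rintro ⟨hk, hkc⟩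
    exact ⟨⟨hk, hkc S hS⟩, fun W hW h =>
      hkc W hW (h.mono (Finset.inter_subset_inter_right (refineBy_le _ A i)))⟩

end RefineBy

/-! ### Flags of sets of columns -/

section IsFlag

variable {κ : Type*}

/-- A chain of nonempty proper subsets of `K`. -/
structure IsFlag (K : Finset κ) (c : Finset (Finset κ)) : Prop where
  chain : ∀ U ∈ c, ∀ W ∈ c, U ⊆ W ∨ W ⊆ U
  nonempty : ∀ U ∈ c, U.Nonempty
  ssubset : ∀ U ∈ c, U ⊂ K

lemma isFlag_empty (K : Finset κ) : IsFlag K ∅ := by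
  constructor <;> simp

variable {K S U W : Finset κ} {c c' : Finset (Finset κ)}

lemma IsFlag.mono (hc' : IsFlag K c') (h : c ⊆ c') : IsFlag K c :=
  ⟨fun U hU W hW => hc'.chain U (h hU) W (h hW), fun U hU => hc'.nonempty U (h hU),
    fun U hU => hc'.ssubset U (h hU)⟩

lemma subset_of_subset_or_superset_of_card_le (h : U ⊆ W ∨ W ⊆ U) (hcard : U.card ≤ W.card) :
    U ⊆ W :=
  h.elim id fun h => (Finset.eq_of_subset_of_card_le h hcard).ge

lemma eq_of_subset_or_superset_of_card_eq (h : U ⊆ W ∨ W ⊆ U) (hcard : U.card = W.card) :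
    U = W :=
  (subset_of_subset_or_superset_of_card_le h hcard.le).antisymm
    (subset_of_subset_or_superset_of_card_le h.symm hcard.ge)

lemma ssubset_of_subset_or_superset_of_card_lt (h : U ⊆ W ∨ W ⊆ U) (hcard : U.card < W.card) :
    U ⊂ W :=
  (subset_of_subset_or_superset_of_card_le h hcard.le).ssubset_of_ne fun h => hcard.ne (h ▸ rfl)

lemma IsFlag.eq_or_ssubset_or_ssuperset (hc : IsFlag K c) (hU : U ∈ c) (hS : S ∈ c) :
    U = S ∨ U ⊂ S ∨ S ⊂ U := by
  rcases hc.chain U hU S hS with h | h <;> rcases h.eq_or_ssubset with h | h <;> simp [h]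

variable [DecidableEq κ]

lemma IsFlag.insert_of_ssubset (hc : IsFlag S c) (hS : S.Nonempty) (hSK : S ⊂ K) :
    IsFlag K (insert S c) := by
  constructor <;> simp only [Finset.forall_mem_insert]
  · exact ⟨⟨.inl Finset.Subset.rfl, fun W hW => .inr (hc.ssubset W hW).subset⟩,
      fun U hU => ⟨.inl (hc.ssubset U hU).subset, hc.chain U hU⟩⟩
  · exact ⟨hS, hc.nonempty⟩
  · exact ⟨hSK, fun U hU => (hc.ssubset U hU).trans hSK⟩

open scoped Classical in
/-- The sets by which the flag `c` can be properly extended. -/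
def extensions (K : Finset κ) (c : Finset (Finset κ)) : Finset (Finset κ) :=
  {U ∈ K.powerset | U ∉ c ∧ IsFlag K (insert U c)}

lemma mem_extensions : U ∈ extensions K c ↔ U ∉ c ∧ IsFlag K (insert U c) := by
  simp only [extensions, Finset.mem_filter, Finset.mem_powerset, and_iff_right_iff_imp]
  exact fun h => (h.2.ssubset U (Finset.mem_insert_self _ _)).subset

lemma notMem_of_mem_extensions (hU : U ∈ extensions K c) : U ∉ c :=
  (mem_extensions.1 hU).1

lemma isFlag_insert_of_mem_extensions (hU : U ∈ extensions K c) : IsFlag K (insert U c) :=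
  (mem_extensions.1 hU).2

lemma subset_or_superset_of_mem_extensions (hU : U ∈ extensions K c) :
    ∀ W ∈ c, U ⊆ W ∨ W ⊆ U := fun W hW =>
  (isFlag_insert_of_mem_extensions hU).chain U (Finset.mem_insert_self _ _) W
    (Finset.mem_insert_of_mem hW)

lemma ssubset_of_mem_extensions (hU : U ∈ extensions K c) : U ⊂ K :=
  (isFlag_insert_of_mem_extensions hU).ssubset U (Finset.mem_insert_self _ _)

lemma mem_extensions_swap (hU : U ∈ extensions K c) (hW : W ∈ extensions K (insert U c)) :
    W ∈ extensions K c ∧ U ∈ extensions K (insert W c) ∧ U ≠ W := by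
  obtain ⟨hWc, hflag⟩ := mem_extensions.1 hW
  rw [Finset.mem_insert, not_or] at hWc
  have hUW : U ≠ W := fun h => hWc.1 h.symm
  refine ⟨mem_extensions.2 ⟨hWc.2, hflag.mono ?_⟩, mem_extensions.2 ⟨?_, ?_⟩, hUW⟩
  · exact Finset.insert_subset_insert _ (Finset.subset_insert _ _)
  · simpa [hUW] using notMem_of_mem_extensions hU
  · rwa [Finset.insert_comm]

lemma extensions_insert_erase {k : κ} (hk : k ∈ K) (hne : (K.erase k).Nonempty)
    (hc : IsFlag (K.erase k) c) :
    extensions K (insert (K.erase k) c) = extensions (K.erase k) c := by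
  ext U
  rw [mem_extensions, mem_extensions, Finset.mem_insert, not_or]
  constructor
  · rintro ⟨⟨hUne, hUc⟩, hflag⟩
    have hU : U ∈ insert U (insert (K.erase k) c) := Finset.mem_insert_self _ _
    have hflag' : IsFlag K (insert U c) :=
      hflag.mono (Finset.insert_subset_insert _ (Finset.subset_insert _ _))
    refine ⟨hUc, hflag'.chain, hflag'.nonempty,
      Finset.forall_mem_insert _ _ _ |>.2 ⟨?_, hc.ssubset⟩⟩
    rcases hflag.eq_or_ssubset_or_ssuperset hU
      (Finset.mem_insert_of_mem (Finset.mem_insert_self _ _)) with h | h | h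
    · exact absurd h hUne
    · exact h
    · exact absurd (hflag.ssubset U hU) ((Finset.erase_covBy hk).2 h)
  · rintro ⟨hUc, hflag⟩
    refine ⟨⟨(hflag.ssubset U (Finset.mem_insert_self _ _)).ne, hUc⟩, ?_⟩
    rw [Finset.insert_comm]
    exact hflag.insert_of_ssubset hne (Finset.erase_ssubset hk)

/-- Adding `∅` and `K` to a flag with `|K| - 2` members gives a chain meeting all but one of the
cardinalities `0, …, |K|`. -/
lemma IsFlag.exists_missing_card (hc : IsFlag K c) (hcard : c.card + 2 = K.card) :
    ∃ s, s + 1 < K.card ∧ (∀ W ∈ c, W.card ≠ s + 1) ∧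
      ∀ m ≤ K.card, m ≠ s + 1 → ∃ W ∈ insert ∅ (insert K c), W.card = m := by
  have himage : c.image Finset.card ⊆ Finset.Ioo 0 K.card := fun m hm => by
    obtain ⟨U, hU, rfl⟩ := Finset.mem_image.1 hm
    exact Finset.mem_Ioo.2
      ⟨Finset.card_pos.2 (hc.nonempty U hU), Finset.card_lt_card (hc.ssubset U hU)⟩
  have hmissing : (Finset.Ioo 0 K.card \ c.image Finset.card).card = 1 := by
    rw [Finset.card_sdiff_of_subset himage, Finset.card_image_of_injOn fun U hU W hW =>
      eq_of_subset_or_superset_of_card_eq (hc.chain U hU W hW), Nat.card_Ioo]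
    omega
  obtain ⟨m₀, hm₀⟩ := Finset.card_eq_one.1 hmissing
  have hmem (m) : (0 < m ∧ m < K.card) ∧ m ∉ c.image Finset.card ↔ m = m₀ := by
    rw [← Finset.mem_Ioo, ← Finset.mem_sdiff, hm₀, Finset.mem_singleton]
  obtain ⟨⟨hpos, hlt⟩, hm₀c⟩ := (hmem m₀).2 rfl
  obtain ⟨s, rfl⟩ := Nat.exists_eq_succ_of_ne_zero hpos.ne'
  refine ⟨s, hlt, fun W hW h => hm₀c (Finset.mem_image.2 ⟨W, hW, h⟩), fun m hm hms => ?_⟩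
  rcases Nat.eq_zero_or_pos m with rfl | hm0
  · exact ⟨∅, by simp⟩
  rcases hm.eq_or_lt with rfl | hmK
  · exact ⟨K, by simp⟩
  have : m ∈ c.image Finset.card := by
    by_contra hmc
    exact hms ((hmem m).1 ⟨⟨hm0, hmK⟩, hmc⟩)
  obtain ⟨W, hW, rfl⟩ := Finset.mem_image.1 this
  exact ⟨W, by simp [hW], rfl⟩

lemma IsFlag.subset_or_superset_of_mem_insert (hc : IsFlag K c) {U W : Finset κ}
    (hU : U ∈ insert ∅ (insert K c)) (hW : W ∈ insert ∅ (insert K c)) : U ⊆ W ∨ W ⊆ U := by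
  simp only [Finset.mem_insert] at hU hW
  rcases hU with rfl | rfl | hU <;> rcases hW with rfl | rfl | hW
  all_goals try simp
  · exact .inr (hc.ssubset W hW).subset
  · exact .inl (hc.ssubset U hU).subset
  · exact hc.chain U hU W hW

lemma IsFlag.exists_gap (hc : IsFlag K c) (hcard : c.card + 2 = K.card) :
    ∃ A ∈ insert ∅ (insert K c), ∃ B ∈ insert ∅ (insert K c), A ⊆ B ∧ B.card = A.card + 2 ∧
      (∀ W ∈ c, W ⊆ A ∨ B ⊆ W) ∧
      ∀ m ≤ K.card, m ≠ A.card + 1 → ∃ W ∈ insert ∅ (insert K c), W.card = m := by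
  obtain ⟨s, hsK, hsc, hs⟩ := hc.exists_missing_card hcard
  obtain ⟨A, hA, rfl⟩ := hs s (by omega) (by omega)
  obtain ⟨B, hB, hBA⟩ := hs (A.card + 2) (by omega) (by omega)
  have hcomp {U W} := hc.subset_or_superset_of_mem_insert (U := U) (W := W)
  refine ⟨A, hA, B, hB, subset_of_subset_or_superset_of_card_le (hcomp hA hB) (by omega), hBA,
    fun W hW => ?_, hs⟩
  have hW' : W ∈ insert ∅ (insert K c) := by simp [hW]
  rcases (hsc W hW).lt_or_gt with h | h
  · exact .inl (subset_of_subset_or_superset_of_card_le (hcomp hW' hA) (by omega))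
  · exact .inr (subset_of_subset_or_superset_of_card_le (hcomp hB hW') (by omega))

lemma IsFlag.exists_extensions_eq_Ioo (hc : IsFlag K c) (hcard : c.card + 2 = K.card) :
    ∃ A B, A ⊆ B ∧ B.card = A.card + 2 ∧ extensions K c = Finset.Ioo A B := by
  obtain ⟨A, hA, B, hB, hAB, hBA, hgap, hs⟩ := hc.exists_gap hcard
  have hBK : B ⊆ K := by
    have := fun W hW => (hc.ssubset W hW).subset
    simp only [Finset.mem_insert] at hB
    rcases hB with rfl | rfl | hB
    exacts [Finset.empty_subset _, Finset.Subset.refl _, this B hB]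
  refine ⟨A, B, hAB, hBA, ?_⟩
  ext U
  rw [mem_extensions, Finset.mem_Ioo]
  constructor
  · rintro ⟨hUc, hU⟩
    have hUK := hU.ssubset U (Finset.mem_insert_self _ _)
    have hUne := hU.nonempty U (Finset.mem_insert_self _ _)
    have hcomp : ∀ W ∈ insert ∅ (insert K c), U ⊆ W ∨ W ⊆ U := fun W hW => by
      refine hU.subset_or_superset_of_mem_insert ?_ ?_ <;>
        simp only [Finset.mem_insert] at hW ⊢ <;> tauto
    have hUA : U.card = A.card + 1 := by
      by_contra hUA
      obtain ⟨W, hW, hWU⟩ := hs U.card (Finset.card_le_card hUK.subset) hUA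
      obtain rfl := eq_of_subset_or_superset_of_card_eq (hcomp W hW) hWU.symm
      simp [hUc, hUne.ne_empty, hUK.ne] at hW
    exact ⟨ssubset_of_subset_or_superset_of_card_lt (hcomp A hA).symm (by omega),
      ssubset_of_subset_or_superset_of_card_lt (hcomp B hB) (by omega)⟩
  · rintro ⟨hAU, hUB⟩
    have hUW : ∀ W ∈ c, U ⊆ W ∨ W ⊆ U := fun W hW =>
      (hgap W hW).symm.imp hUB.subset.trans fun h => h.trans hAU.subset
    refine ⟨fun hUc => (hgap U hUc).elim hAU.not_subset hUB.not_subset, ?_, ?_, ?_⟩ <;>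
      simp only [Finset.forall_mem_insert]
    · exact ⟨⟨.inl (Finset.Subset.refl _), hUW⟩, fun V hV => ⟨(hUW V hV).symm, hc.chain V hV⟩⟩
    · exact ⟨(Finset.exists_of_ssubset hAU).imp fun _ h => h.1, hc.nonempty⟩
    · exact ⟨hUB.trans_subset hBK, hc.ssubset⟩

lemma IsFlag.card_extensions (hc : IsFlag K c) (hcard : c.card + 2 = K.card) :
    (extensions K c).card = 2 := by
  obtain ⟨A, B, hAB, hBA, h⟩ := hc.exists_extensions_eq_Ioo hcard
  rw [h, Finset.card_Ioo_finset hAB, hBA]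
  simp

end IsFlag

/-! ### Separating sets of columns -/

section Separates

variable {ι κ : Type*} {A B : ι → Finset κ} {K U Z W : Finset κ}

/-- No row of `A` has columns on both sides of `Z`. -/
def Separates (Z : Finset κ) (A : ι → Finset κ) : Prop :=
  ∀ i, A i ⊆ Z ∨ Disjoint (A i) Z

lemma Separates.mono (h : Separates Z B) (hAB : A ≤ B) : Separates Z A := fun i =>
  (h i).imp (Finset.Subset.trans (hAB i)) (Finset.disjoint_of_subset_left (hAB i))

open scoped Classical in
/-- The subsets of `K` separating `A`. There are `2 ^ m` of them, where `m` is the number of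
connected components of the hypergraph on `K` whose edges are the rows of `A`. -/
def separators (K : Finset κ) (A : ι → Finset κ) : Finset (Finset κ) :=
  {Z ∈ K.powerset | Separates Z A}

lemma mem_separators : Z ∈ separators K A ↔ Z ⊆ K ∧ Separates Z A := by
  simp [separators]

lemma card_separators_le (K : Finset κ) (A : ι → Finset κ) :
    (separators K A).card ≤ 2 ^ K.card := by
  rw [← Finset.card_powerset]
  exact Finset.card_le_card fun Z hZ => Finset.mem_powerset.2 (mem_separators.1 hZ).1

variable [DecidableEq κ]

lemma Separates.symmDiff (hZ : Separates Z A) (hW : Separates W A) :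
    Separates (symmDiff Z W) A := by
  intro i
  simp only [Finset.subset_iff, Finset.disjoint_left, Finset.mem_symmDiff]
  rcases hZ i with hZ | hZ <;> rcases hW i with hW | hW
  · exact .inr fun x hx => by simp [hZ hx, hW hx]
  · exact .inl fun x hx => by simp [hZ hx, Finset.disjoint_left.1 hW hx]
  · exact .inl fun x hx => by simp [hW hx, Finset.disjoint_left.1 hZ hx]
  · exact .inr fun x hx => by simp [Finset.disjoint_left.1 hZ hx, Finset.disjoint_left.1 hW hx]

lemma separates_refineBy_singleton (U : Finset κ) (A : ι → Finset κ) :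
    Separates U (refineBy {U} A) := by
  intro i
  by_cases h : (A i ∩ U).Nonempty
  · exact .inl fun k hk => (mem_refineBy_singleton.1 hk).2 h
  · exact .inr (Finset.disjoint_left.2 fun k hk hkU =>
      h ⟨k, Finset.mem_inter.2 ⟨refineBy_le _ _ i hk, hkU⟩⟩)

lemma Separates.refineBy_singleton_eq (h : Separates U A) : refineBy {U} A = A := by
  refine (refineBy_le _ A).antisymm fun i k hk => mem_refineBy_singleton.2 ⟨hk, fun ⟨l, hl⟩ => ?_⟩
  rw [Finset.mem_inter] at hl
  exact (h i).resolve_right (fun h => Finset.disjoint_left.1 h hl.1 hl.2) hk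

lemma two_mul_card_separators_le (hU : U ⊆ K) (hne : refineBy {U} A ≠ A) :
    2 * (separators K A).card ≤ (separators K (refineBy {U} A)).card := by
  have hsub : separators K A ∪ (separators K A).image (symmDiff · U) ⊆
      separators K (refineBy {U} A) := fun Z hZ => by
    rw [Finset.mem_union, Finset.mem_image] at hZ
    rw [mem_separators]
    rcases hZ with hZ | ⟨W, hW, rfl⟩
    · exact (mem_separators.1 hZ).imp_right fun h => h.mono (refineBy_le _ _)
    · obtain ⟨hWK, hW⟩ := mem_separators.1 hW
      exact ⟨(Finset.symmDiff_subset_union).trans (Finset.union_subset hWK hU),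
        (hW.mono (refineBy_le _ _)).symmDiff (separates_refineBy_singleton U A)⟩
  have hdisj : Disjoint (separators K A) ((separators K A).image (symmDiff · U)) := by
    rw [Finset.disjoint_left]
    intro Z hZ hZ'
    obtain ⟨W, hW, rfl⟩ := Finset.mem_image.1 hZ'
    have h := (mem_separators.1 hW).2.symmDiff (mem_separators.1 hZ).2
    rw [symmDiff_symmDiff_cancel_left] at h
    exact hne h.refineBy_singleton_eq
  have hcard := Finset.card_le_card hsub
  rw [Finset.card_union_of_disjoint hdisj,
    Finset.card_image_of_injective _ (symmDiff_left_injective U)] at hcard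
  omega

end Separates

/-! ### Rotating flags -/

section Rotate

variable {κ : Type*} [DecidableEq κ] {K S U W : Finset κ} {c : Finset (Finset κ)}

/-- The ordered partition of `K` given by a flag through `S` has two blocks of consecutive parts,
those inside `S` and those outside. Interchanging the two blocks replaces every member `U` of the
flag by `rotate K S U`. -/
def rotate (K S U : Finset κ) : Finset κ :=
  if U = S then K \ S else if U ⊆ S then U ∪ (K \ S) else U \ S

@[simp]
lemma rotate_self (K S : Finset κ) : rotate K S S = K \ S := by
  simp [rotate]

lemma rotate_of_ssubset (h : U ⊂ S) : rotate K S U = U ∪ (K \ S) := by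
  simp [rotate, h.ne, h.subset]

lemma rotate_of_ssuperset (h : S ⊂ U) : rotate K S U = U \ S := by
  simp [rotate, h.ne', h.not_subset]

lemma IsFlag.rotate_rotate (hc : IsFlag K c) (hS : S ∈ c) (hU : U ∈ c) :
    rotate K (K \ S) (rotate K S U) = U := by
  have hSK : K \ (K \ S) = S := Finset.sdiff_sdiff_eq_self (hc.ssubset S hS).subset
  rcases hc.eq_or_ssubset_or_ssuperset hU hS with rfl | h | h
  · rw [rotate_self, rotate_self, hSK]
  · obtain ⟨x, hx⟩ := hc.nonempty U hU
    have hlt : K \ S ⊂ U ∪ (K \ S) := Finset.ssubset_iff_of_subset Finset.subset_union_right |>.2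
      ⟨x, Finset.mem_union_left _ hx, fun hxS => (Finset.mem_sdiff.1 hxS).2 (h.subset hx)⟩
    rw [rotate_of_ssubset h, rotate_of_ssuperset hlt, Finset.union_sdiff_right,
      Finset.sdiff_eq_self_of_disjoint]
    exact Finset.disjoint_of_subset_left h.subset Finset.disjoint_sdiff
  · obtain ⟨x, hxK, hxU⟩ := Finset.exists_of_ssubset (hc.ssubset U hU)
    have hlt : U \ S ⊂ K \ S := by
      refine (Finset.ssubset_iff_of_subset
        (Finset.sdiff_subset_sdiff (hc.ssubset U hU).subset Finset.Subset.rfl)).2 ⟨x, ?_, ?_⟩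
      · exact Finset.mem_sdiff.2 ⟨hxK, fun hxS => hxU (h.subset hxS)⟩
      · exact fun hx => hxU (Finset.mem_sdiff.1 hx).1
    rw [rotate_of_ssuperset h, rotate_of_ssubset hlt, hSK, Finset.sdiff_union_of_subset h.subset]

lemma IsFlag.rotate_subset_or_superset (hc : IsFlag K c) (hS : S ∈ c) (hU : U ∈ c) (hW : W ∈ c) :
    rotate K S U ⊆ rotate K S W ∨ rotate K S W ⊆ rotate K S U := by
  rcases hc.eq_or_ssubset_or_ssuperset hU hS with rfl | hUS | hUS <;>
    rcases hc.eq_or_ssubset_or_ssuperset hW hS with rfl | hWS | hWS <;>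
    simp only [rotate_self, rotate_of_ssubset, rotate_of_ssuperset, *]
  · exact .inl Finset.Subset.rfl
  · exact .inl Finset.subset_union_right
  · exact .inr (Finset.sdiff_subset_sdiff (hc.ssubset W hW).subset Finset.Subset.rfl)
  · exact .inr Finset.subset_union_right
  · exact (hc.chain U hU W hW).imp Finset.union_subset_union_left Finset.union_subset_union_left
  · exact .inr ((Finset.sdiff_subset_sdiff (hc.ssubset W hW).subset Finset.Subset.rfl).trans
      Finset.subset_union_right)
  · exact .inl (Finset.sdiff_subset_sdiff (hc.ssubset U hU).subset Finset.Subset.rfl)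
  · exact .inl ((Finset.sdiff_subset_sdiff (hc.ssubset U hU).subset Finset.Subset.rfl).trans
      Finset.subset_union_right)
  · exact (hc.chain U hU W hW).imp (Finset.sdiff_subset_sdiff · Finset.Subset.rfl)
      (Finset.sdiff_subset_sdiff · Finset.Subset.rfl)

lemma IsFlag.rotate_nonempty (hc : IsFlag K c) (hS : S ∈ c) (hU : U ∈ c) :
    (rotate K S U).Nonempty := by
  rcases hc.eq_or_ssubset_or_ssuperset hU hS with rfl | h | h
  · rw [rotate_self]
    exact Finset.sdiff_nonempty.2 (hc.ssubset U hU).not_subset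
  · rw [rotate_of_ssubset h]
    exact (hc.nonempty U hU).mono Finset.subset_union_left
  · rw [rotate_of_ssuperset h]
    exact Finset.sdiff_nonempty.2 h.not_subset

lemma IsFlag.rotate_ssubset (hc : IsFlag K c) (hS : S ∈ c) (hU : U ∈ c) : rotate K S U ⊂ K := by
  rcases hc.eq_or_ssubset_or_ssuperset hU hS with rfl | h | h
  · rw [rotate_self]
    exact Finset.sdiff_ssubset (hc.ssubset U hU).subset (hc.nonempty U hU)
  · obtain ⟨x, hxS, hxU⟩ := Finset.exists_of_ssubset h
    rw [rotate_of_ssubset h]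
    exact (Finset.ssubset_iff_of_subset (Finset.union_subset (hc.ssubset U hU).subset
      Finset.sdiff_subset)).2 ⟨x, (hc.ssubset S hS).subset hxS, by simp [hxS, hxU]⟩
  · rw [rotate_of_ssuperset h]
    exact (Finset.sdiff_ssubset h.subset (hc.nonempty S hS)).trans (hc.ssubset U hU)

lemma IsFlag.image_rotate (hc : IsFlag K c) (hS : S ∈ c) : IsFlag K (c.image (rotate K S)) := by
  constructor <;> simp only [Finset.forall_mem_image]
  · exact fun U hU W hW => hc.rotate_subset_or_superset hS hU hW
  · exact fun U hU => hc.rotate_nonempty hS hU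
  · exact fun U hU => hc.rotate_ssubset hS hU

lemma sdiff_mem_image_rotate (hS : S ∈ c) : K \ S ∈ c.image (rotate K S) :=
  Finset.mem_image.2 ⟨S, hS, rotate_self K S⟩

lemma IsFlag.image_rotate_image_rotate (hc : IsFlag K c) (hS : S ∈ c) :
    (c.image (rotate K S)).image (rotate K (K \ S)) = c := by
  have hcomp : Set.EqOn (rotate K (K \ S) ∘ rotate K S) id c := fun U hU => hc.rotate_rotate hS hU
  rw [Finset.image_image, Finset.image_congr hcomp, Finset.image_id]

lemma rotate_rotate_of_mem_extensions (hS : S ∈ c) (hU : U ∈ extensions K c) :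
    rotate K (K \ S) (rotate K S U) = U :=
  (isFlag_insert_of_mem_extensions hU).rotate_rotate (Finset.mem_insert_of_mem hS)
    (Finset.mem_insert_self _ _)

lemma rotate_mem_extensions (hc : IsFlag K c) (hS : S ∈ c) (hU : U ∈ extensions K c) :
    rotate K S U ∈ extensions K (c.image (rotate K S)) := by
  refine mem_extensions.2 ⟨fun h => ?_, ?_⟩
  · obtain ⟨W, hW, hWU⟩ := Finset.mem_image.1 h
    have hW' := hc.rotate_rotate hS hW
    rw [hWU, rotate_rotate_of_mem_extensions hS hU] at hW'
    exact notMem_of_mem_extensions hU (hW' ▸ hW)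
  · rw [← Finset.image_insert]
    exact (isFlag_insert_of_mem_extensions hU).image_rotate (Finset.mem_insert_of_mem hS)

lemma IsFlag.inter_rotate_of_subset (hc : IsFlag K c) (hS : S ∈ c) (hU : U ∈ c) {s : Finset κ}
    (hs : s ⊆ S) : s ∩ rotate K S U = ∅ ∧ s ⊆ U ∨ s ∩ rotate K S U = s ∩ U := by
  have hsdiff (T : Finset κ) : s ∩ (T \ S) = ∅ := by
    rw [← Finset.disjoint_iff_inter_eq_empty]
    exact Finset.disjoint_of_subset_left hs Finset.disjoint_sdiff
  rcases hc.eq_or_ssubset_or_ssuperset hU hS with rfl | h | h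
  · exact .inl ⟨by rw [rotate_self, hsdiff], hs⟩
  · exact .inr (by rw [rotate_of_ssubset h, Finset.inter_union_distrib_left, hsdiff,
      Finset.union_empty])
  · exact .inl ⟨by rw [rotate_of_ssuperset h, hsdiff], hs.trans h.subset⟩

lemma IsFlag.inter_rotate_of_disjoint (hc : IsFlag K c) (hS : S ∈ c) (hU : U ∈ c) {s : Finset κ}
    (hsK : s ⊆ K) (hs : Disjoint s S) :
    s ⊆ rotate K S U ∧ s ∩ U = ∅ ∨ s ∩ rotate K S U = s ∩ U := by
  have hsS : s ⊆ K \ S := Finset.subset_sdiff.2 ⟨hsK, hs⟩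
  rcases hc.eq_or_ssubset_or_ssuperset hU hS with rfl | h | h
  · exact .inl ⟨by rwa [rotate_self], Finset.disjoint_iff_inter_eq_empty.1 hs⟩
  · rw [rotate_of_ssubset h]
    exact .inl ⟨hsS.trans Finset.subset_union_right,
      Finset.disjoint_iff_inter_eq_empty.1 (Finset.disjoint_of_subset_right h.subset hs)⟩
  · refine .inr ?_
    rw [rotate_of_ssuperset h, ← Finset.inter_sdiff_assoc, Finset.sdiff_eq_self_of_disjoint]
    exact Finset.disjoint_of_subset_left Finset.inter_subset_left hs

lemma refineBy_image_rotate {ι : Type*} {A : ι → Finset κ} (hc : IsFlag K c) (hS : S ∈ c)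
    (hA : Separates S A) (hAK : ∀ i, A i ⊆ K) :
    refineBy (c.image (rotate K S)) A = refineBy c A := by
  ext i k
  rw [mem_refineBy, mem_refineBy, Finset.forall_mem_image]
  refine and_congr_right fun hk => forall₂_congr fun U hU => ?_
  have hmem (T : Finset κ) : k ∈ T ↔ k ∈ A i ∩ T := by simp [hk]
  rcases hA i with h | h
  · rcases hc.inter_rotate_of_subset hS hU h with ⟨hrot, hAU⟩ | heq
    · simp [hrot, hAU hk]
    · rw [hmem, hmem U, heq]
  · rcases hc.inter_rotate_of_disjoint hS hU (hAK i) h with ⟨hrot, hAU⟩ | heq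
    · simp [hAU, hrot hk]
    · rw [hmem, hmem U, heq]

end Rotate

/-! ### The subdivided dual cell of a type -/

section FlagChain

variable {ι κ X : Type*} [DecidableEq X] {K : Finset κ} {pt : (ι → Finset κ) → X}
  {V : ι → Finset κ} {c : Finset (Finset κ)}

/-- The simplices spanned by the chains of types of `M` refining `V`. -/
def chainSimplices (M : Set (ι → Finset κ)) (pt : (ι → Finset κ) → X) (V : ι → Finset κ) :
    Set (Finset X) :=
  {σ | ∃ F : Finset (ι → Finset κ), σ = F.image pt ∧ IsChain (· ≤ ·) (F : Set (ι → Finset κ)) ∧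
    ∀ A ∈ F, A ∈ M ∧ A ≤ V}

lemma chainSimplices_mono {M : Set (ι → Finset κ)} {W : ι → Finset κ} (h : V ≤ W) :
    chainSimplices M pt V ⊆ chainSimplices M pt W := by
  rintro σ ⟨F, hσ, hF, hFM⟩
  exact ⟨F, hσ, hF, fun A hA => (hFM A hA).imp_right (·.trans h)⟩

lemma insert_mem_chainSimplices {M : Set (ι → Finset κ)} (hV : V ∈ M) {σ : Finset X}
    (hσ : σ ∈ chainSimplices M pt V) : insert (pt V) σ ∈ chainSimplices M pt V := by
  classical
  obtain ⟨F, rfl, hF, hFM⟩ := hσ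
  refine ⟨insert V F, by rw [Finset.image_insert], ?_, ?_⟩
  · rw [Finset.coe_insert]
    exact hF.insert fun A hA _ => .inr (hFM A hA).2
  · exact Finset.forall_mem_insert _ _ _ |>.2 ⟨⟨hV, le_rfl⟩, hFM⟩

variable [DecidableEq κ]

/-- The sum of all simplices with vertices `pt (refineBy c V)`, `pt (refineBy (insert U₁ c) V)`, …,
`pt (refineBy (insert Uᵣ (… (insert U₁ c))) V)` over the ways of extending the flag `c` in `r`
steps; degenerate simplices count as `0`. For `c = ∅` and `r = |K| - 1` this is the barycentric
subdivision of the region of the types refining `V`. -/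
def flagChain (K : Finset κ) (pt : (ι → Finset κ) → X) (V : ι → Finset κ) :
    ℕ → Finset (Finset κ) → Chain X
  | 0, c => simplex {pt (refineBy c V)}
  | r + 1, c => cone (pt (refineBy c V)) (∑ U ∈ extensions K c, flagChain K pt V r (insert U c))

lemma boundary_flagChain {r : ℕ} (hc : IsFlag K c) (hcard : c.card + r + 2 = K.card) :
    boundary (flagChain K pt V (r + 1) c) =
      ∑ U ∈ extensions K c, flagChain K pt V r (insert U c) := by
  induction r generalizing c with
  | zero =>
    have hsum : ∑ U ∈ extensions K c, boundary (flagChain K pt V 0 (insert U c)) = 0 := by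
      simp only [flagChain, boundary_simplex, Finset.sum_singleton, Finset.erase_singleton,
        Finset.sum_const, hc.card_extensions hcard, two_nsmul, ZModModule.add_self]
    rw [flagChain, boundary_cone, map_sum, hsum, map_zero, add_zero]
  | succ r ih =>
    have hsum : ∑ U ∈ extensions K c, boundary (flagChain K pt V (r + 1) (insert U c)) = 0 := by
      rw [Finset.sum_congr rfl fun U hU => ih (isFlag_insert_of_mem_extensions hU)
        (by rw [Finset.card_insert_of_notMem (notMem_of_mem_extensions hU)]; omega)]
      exact sum_sum_eq_zero_of_symm (fun U hU W hW => mem_extensions_swap hU hW)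
        fun U _ W _ => by rw [Finset.insert_comm]
    rw [flagChain, boundary_cone, map_sum, hsum, map_zero, add_zero]

lemma cone_flagChain (r : ℕ) (c : Finset (Finset κ)) :
    cone (pt (refineBy c V)) (flagChain K pt V r c) = 0 := by
  cases r with
  | zero => simp [flagChain, cone_simplex]
  | succ r => rw [flagChain, cone_cone]

/-- A step refining properly at least doubles the number of separators, and the other steps give
degenerate simplices. -/
lemma flagChain_eq_zero {r : ℕ} (h : 2 ^ K.card < (separators K (refineBy c V)).card * 2 ^ r) :
    flagChain K pt V r c = 0 := by
  induction r generalizing c with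
  | zero =>
    have := card_separators_le K (refineBy c V)
    omega
  | succ r ih =>
    rw [flagChain, map_sum]
    refine Finset.sum_eq_zero fun U hU => ?_
    have hins := refineBy_insert (subset_or_superset_of_mem_extensions hU) V
    by_cases hne : refineBy {U} (refineBy c V) = refineBy c V
    · rw [← hne, ← hins]
      exact cone_flagChain r (insert U c)
    · rw [ih, map_zero]
      calc 2 ^ K.card < (separators K (refineBy c V)).card * 2 ^ (r + 1) := h
        _ = 2 * (separators K (refineBy c V)).card * 2 ^ r := by ring
        _ ≤ (separators K (refineBy (insert U c) V)).card * 2 ^ r := by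
          rw [hins]
          exact Nat.mul_le_mul_right _
            (two_mul_card_separators_le (ssubset_of_mem_extensions hU).subset hne)

lemma flagChain_refineBy_singleton {S : Finset κ} (hc : IsFlag K c) (hS : S ∈ c) (r : ℕ) :
    flagChain K pt (refineBy {S} V) r c = flagChain K pt V r c := by
  have hrefine : refineBy c (refineBy {S} V) = refineBy c V :=
    refineBy_refineBy_singleton (fun W hW => hc.chain W hW S hS) hS V
  induction r generalizing c with
  | zero => rw [flagChain, flagChain, hrefine]
  | succ r ih =>
    rw [flagChain, flagChain, hrefine]
    congr 1
    refine Finset.sum_congr rfl fun U hU => ?_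
    have hflag := isFlag_insert_of_mem_extensions hU
    have hSU := Finset.mem_insert_of_mem (b := U) hS
    exact ih hflag hSU (refineBy_refineBy_singleton (fun W hW => hflag.chain W hW S hSU) hSU V)

lemma flagChain_image_rotate {S : Finset κ} (hV : Separates S V) (hVK : ∀ i, V i ⊆ K)
    (hc : IsFlag K c) (hS : S ∈ c) (r : ℕ) :
    flagChain K pt V r (c.image (rotate K S)) = flagChain K pt V r c := by
  induction r generalizing c with
  | zero => rw [flagChain, flagChain, refineBy_image_rotate hc hS hV hVK]
  | succ r ih =>
    rw [flagChain, flagChain, refineBy_image_rotate hc hS hV hVK]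
    congr 1
    symm
    have hKS := sdiff_mem_image_rotate (K := K) hS
    refine Finset.sum_bij' (fun U _ => rotate K S U) (fun U _ => rotate K (K \ S) U)
      (fun U hU => rotate_mem_extensions hc hS hU) (fun U hU => ?_)
      (fun U hU => rotate_rotate_of_mem_extensions hS hU) (fun U hU => ?_) fun U hU => ?_
    · simpa only [hc.image_rotate_image_rotate hS] using
        rotate_mem_extensions (hc.image_rotate hS) hKS hU
    · simpa only [Finset.sdiff_sdiff_eq_self (hc.ssubset S hS).subset] using
        rotate_rotate_of_mem_extensions hKS hU
    · rw [← Finset.image_insert, ih (isFlag_insert_of_mem_extensions hU)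
        (Finset.mem_insert_of_mem hS)]

lemma flagChain_sdiff {S : Finset κ} (hV : Separates S V) (hVK : ∀ i, V i ⊆ K)
    (hS : IsFlag K {S}) (r : ℕ) : flagChain K pt V r {K \ S} = flagChain K pt V r {S} := by
  simpa using flagChain_image_rotate (pt := pt) hV hVK hS (Finset.mem_singleton_self S) r

lemma refineBy_insert_of_subset {S : Finset κ} (hV : ∀ i, V i ⊆ S) (c : Finset (Finset κ)) :
    refineBy (insert S c) V = refineBy c V := by
  ext i x
  simp only [mem_refineBy, Finset.forall_mem_insert]
  exact ⟨fun h => ⟨h.1, h.2.2⟩, fun h => ⟨h.1, fun _ => hV i h.1, h.2⟩⟩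

lemma flagChain_insert_erase {k : κ} (hk : k ∈ K) (hne : (K.erase k).Nonempty)
    (hV : ∀ i, V i ⊆ K.erase k) (hc : IsFlag (K.erase k) c) (r : ℕ) :
    flagChain K pt V r (insert (K.erase k) c) = flagChain (K.erase k) pt V r c := by
  induction r generalizing c with
  | zero => rw [flagChain, flagChain, refineBy_insert_of_subset hV]
  | succ r ih =>
    rw [flagChain, flagChain, refineBy_insert_of_subset hV, extensions_insert_erase hk hne hc]
    congr 1
    refine Finset.sum_congr rfl fun U hU => ?_
    rw [Finset.insert_comm, ih (isFlag_insert_of_mem_extensions hU)]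

lemma flagChain_mem_chainsIn {M : Set (ι → Finset κ)}
    (hM : ∀ A ∈ M, ∀ U : Finset κ, refineBy {U} A ∈ M) {r : ℕ} (hc : refineBy c V ∈ M) :
    flagChain K pt V r c ∈ chainsIn (chainSimplices M pt (refineBy c V)) := by
  induction r generalizing c with
  | zero => exact simplex_mem_chainsIn ⟨{refineBy c V}, by simp, by simp, by simpa using hc⟩
  | succ r ih =>
    rw [flagChain]
    refine cone_mem_chainsIn (fun σ hσ => insert_mem_chainSimplices hc hσ)
      (Submodule.sum_mem _ fun U hU => ?_)
    refine Finsupp.supported_mono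
      (chainSimplices_mono (refineBy_anti (Finset.subset_insert U c) V)) (ih ?_)
    rw [refineBy_insert (subset_or_superset_of_mem_extensions hU)]
    exact hM _ hc U

end FlagChain

/-! ### Walls between connected types -/

section IsWall

variable {ι κ : Type*} {K S Z : Finset κ} {D V : ι → Finset κ}

/-- The hypergraph on `K` whose edges are the rows of `V` is connected. -/
def IsConnectedOn (K : Finset κ) (V : ι → Finset κ) : Prop :=
  ∀ Z ⊆ K, Separates Z V → Z = ∅ ∨ Z = K

/-- Some row of `D` has a column in `S`. -/
def Meets (D : ι → Finset κ) (S : Finset κ) : Prop := ∃ i, ∃ k ∈ D i, k ∈ S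

variable [DecidableEq κ]

/-- The hypergraph on `K` whose edges are the rows of `D` has exactly the two connected components
`S` and `K \ S`. -/
structure IsWall (K : Finset κ) (D : ι → Finset κ) (S : Finset κ) : Prop where
  nonempty : S.Nonempty
  ssubset : S ⊂ K
  separates : Separates S D
  eq_of_separates : ∀ Z ⊆ K, Separates Z D → Z = ∅ ∨ Z = S ∨ Z = K \ S ∨ Z = K

lemma mem_extensions_empty : S ∈ extensions K ∅ ↔ S.Nonempty ∧ S ⊂ K := by
  rw [mem_extensions]
  exact ⟨fun h => ⟨h.2.nonempty S (by simp), h.2.ssubset S (by simp)⟩,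
    fun h => ⟨by simp, (isFlag_empty S).insert_of_ssubset h.1 h.2⟩⟩

lemma IsWall.mem_extensions_empty (h : IsWall K D S) : S ∈ extensions K ∅ :=
  TropicalOrientedMatroid.mem_extensions_empty.2 ⟨h.nonempty, h.ssubset⟩

lemma isFlag_singleton_of_mem_extensions_empty (hS : S ∈ extensions K ∅) : IsFlag K {S} :=
  (mem_extensions.1 hS).2

lemma Separates.sdiff (h : Separates Z D) (hD : ∀ i, D i ⊆ K) : Separates (K \ Z) D := fun i =>
  (h i).symm.imp (fun h => Finset.subset_sdiff.2 ⟨hD i, h⟩)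
    fun h => Finset.disjoint_of_subset_left h Finset.disjoint_sdiff

lemma IsWall.sdiff (h : IsWall K D S) (hD : ∀ i, D i ⊆ K) : IsWall K D (K \ S) where
  nonempty := Finset.sdiff_nonempty.2 h.ssubset.not_subset
  ssubset := Finset.sdiff_ssubset h.ssubset.subset h.nonempty
  separates := h.separates.sdiff hD
  eq_of_separates Z hZK hZ := by
    rw [Finset.sdiff_sdiff_eq_self h.ssubset.subset]
    rcases h.eq_of_separates Z hZK hZ with h | h | h | h <;> simp [h]

lemma sdiff_ne_self (hS : S.Nonempty) : K \ S ≠ S := fun h => by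
  obtain ⟨x, hx⟩ := hS
  exact (Finset.mem_sdiff.1 (h ▸ hx)).2 hx

lemma five_le_card_separators (hD : ∀ i, D i ⊆ K) (hne : S.Nonempty) (hss : S ⊂ K)
    (hS : Separates S D) (hwall : ¬ IsWall K D S) : 5 ≤ (separators K D).card := by
  obtain ⟨Z, hZK, hZ, hZne⟩ : ∃ Z ⊆ K, Separates Z D ∧ ¬ (Z = ∅ ∨ Z = S ∨ Z = K \ S ∨ Z = K) := by
    by_contra! h
    exact hwall ⟨hne, hss, hS, h⟩
  simp only [not_or] at hZne
  have hsub : ({∅, S, K \ S, K, Z} : Finset (Finset κ)) ⊆ separators K D := by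
    simp only [Finset.insert_subset_iff, Finset.singleton_subset_iff, mem_separators]
    exact ⟨⟨by simp, fun i => .inr (by simp)⟩, ⟨hss.subset, hS⟩,
      ⟨Finset.sdiff_subset, hS.sdiff hD⟩, ⟨Finset.Subset.rfl, fun i => .inl (hD i)⟩, hZK, hZ⟩
  have hcard : ({∅, S, K \ S, K, Z} : Finset (Finset κ)).card = 5 := by
    have hsdiff : (K \ S).Nonempty := Finset.sdiff_nonempty.2 hss.not_subset
    have hsdiffK : K \ S ≠ K := (Finset.sdiff_ssubset hss.subset hne).ne
    have hK := hne.mono hss.subset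
    simp [Finset.card_insert_of_notMem, hne.ne_empty.symm, hsdiff.ne_empty.symm, hK.ne_empty.symm,
      (sdiff_ne_self hne).symm, hss.ne, hsdiffK, Ne.symm hZne.1, Ne.symm hZne.2.1,
      Ne.symm hZne.2.2.1, Ne.symm hZne.2.2.2,
      -Finset.sdiff_eq_empty_iff_subset]
  exact hcard ▸ Finset.card_le_card hsub

lemma flagChain_eq_zero_of_not_isWall {X : Type*} [DecidableEq X] {pt : (ι → Finset κ) → X}
    (hV : ∀ i, V i ⊆ K) (hS : S ∈ extensions K ∅) (hwall : ¬ IsWall K (refineBy {S} V) S) :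
    flagChain K pt V (K.card - 2) {S} = 0 := by
  obtain ⟨hne, hss⟩ := mem_extensions_empty.1 hS
  have hfive := five_le_card_separators (fun i => (refineBy_le {S} V i).trans (hV i)) hne hss
    (separates_refineBy_singleton S V) hwall
  have hK : K.card = K.card - 2 + 2 := by
    have := Finset.card_pos.2 hne
    have := Finset.card_lt_card hss
    omega
  apply flagChain_eq_zero
  calc 2 ^ K.card = 4 * 2 ^ (K.card - 2) := by rw [hK, pow_add, Nat.add_sub_cancel]; ring
    _ < 5 * 2 ^ (K.card - 2) := by gcongr; norm_num
    _ ≤ (separators K (refineBy {S} V)).card * 2 ^ (K.card - 2) := by gcongr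

lemma IsConnectedOn.exists_mem_mem_sdiff (h : IsConnectedOn K V) (hV : ∀ i, V i ⊆ K)
    (hne : S.Nonempty) (hss : S ⊂ K) : ∃ i, ∃ s ∈ V i, ∃ t ∈ V i, s ∈ S ∧ t ∈ K \ S := by
  by_contra! hrow
  have hS : Separates S V := fun i => by
    by_contra! hi
    obtain ⟨t, ht, htS⟩ := Finset.not_subset.1 hi.1
    obtain ⟨s, hs, hsS⟩ := Finset.not_disjoint_iff.1 hi.2
    exact hrow i s hs t ht hsS (Finset.mem_sdiff.2 ⟨hV i ht, htS⟩)
  exact (h S hss.subset hS).elim hne.ne_empty hss.ne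

lemma IsWall.apply_eq (h : IsWall K D S) {ξ : κ → ℤ} (hD : ∀ i, D i ⊆ K)
    (hξ : ∀ i, ∀ k ∈ D i, ∀ l ∈ D i, ξ k = ξ l) {s t : κ} (hs : s ∈ S) (ht : t ∈ S) :
    ξ s = ξ t := by
  have hlevel : Separates {k ∈ K | ξ k = ξ s} D := fun i => by
    by_cases hi : ∃ k ∈ D i, ξ k = ξ s
    · obtain ⟨k, hk, hks⟩ := hi
      exact .inl fun l hl => Finset.mem_filter.2 ⟨hD i hl, (hξ i l hl k hk).trans hks⟩
    · exact .inr (Finset.disjoint_left.2 fun k hk hks => hi ⟨k, hk, (Finset.mem_filter.1 hks).2⟩)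
  have hs' : s ∈ ({k ∈ K | ξ k = ξ s} : Finset κ) := by simp [h.ssubset.subset hs]
  suffices t ∈ ({k ∈ K | ξ k = ξ s} : Finset κ) from (Finset.mem_filter.1 this).2.symm
  rcases h.eq_of_separates _ (Finset.filter_subset _ _) hlevel with h' | h' | h' | h' <;>
    rw [h'] at hs' ⊢
  · simp at hs'
  · exact ht
  · exact absurd hs (Finset.mem_sdiff.1 hs').2
  · exact h.ssubset.subset ht

lemma IsWall.isConnectedOn_of_le (h : IsWall K D S) (hDV : D ≤ V) {i : ι} {s t : κ}
    (hs : s ∈ V i) (ht : t ∈ V i) (hsS : s ∈ S) (htS : t ∈ K \ S) : IsConnectedOn K V := by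
  intro Z hZK hZ
  rcases h.eq_of_separates Z hZK (hZ.mono hDV) with rfl | rfl | rfl | rfl
  · exact .inl rfl
  · exact ((hZ i).elim (fun h => (Finset.mem_sdiff.1 htS).2 (h ht))
      fun h => Finset.disjoint_left.1 h hs hsS).elim
  · exact ((hZ i).elim (fun h => (Finset.mem_sdiff.1 (h hs)).2 hsS)
      fun h => Finset.disjoint_left.1 h ht htS).elim
  · exact .inr rfl

lemma isWall_erase_iff {k : κ} (hk : k ∈ K) (hne : (K.erase k).Nonempty)
    (hD : ∀ i, D i ⊆ K.erase k) : IsWall K D (K.erase k) ↔ IsConnectedOn (K.erase k) D := by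
  have hsdiff : K \ K.erase k = {k} := Finset.sdiff_erase_self hk
  constructor
  · intro h Z hZK hZ
    have hkZ : k ∉ Z := fun h => Finset.notMem_erase k K (hZK h)
    rcases h.eq_of_separates Z (hZK.trans (Finset.erase_subset _ _)) hZ with h | h | h | h
    · exact .inl h
    · exact .inr h
    · exact absurd (by simp [h, hsdiff]) hkZ
    · exact absurd (h ▸ hk) hkZ
  · refine fun h => ⟨hne, Finset.erase_ssubset hk, fun i => .inl (hD i), fun Z hZK hZ => ?_⟩
    have hZ' : Separates (Z.erase k) D := fun i =>
      (hZ i).imp (fun hi x hx => Finset.mem_erase.2 ⟨Finset.ne_of_mem_erase (hD i hx), hi hx⟩)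
        (Finset.disjoint_of_subset_right (Finset.erase_subset _ _))
    rw [hsdiff]
    by_cases hkZ : k ∈ Z
    · rw [← Finset.insert_erase hkZ]
      rcases h _ (Finset.erase_subset_erase k hZK) hZ' with h | h
      · simp [h]
      · simp [h, Finset.insert_erase hk]
    · rw [Finset.erase_eq_of_notMem hkZ] at hZ'
      rcases h Z (Finset.subset_erase.2 ⟨hZK, hkZ⟩) hZ' with h | h <;> simp [h]

lemma IsWall.exists_eq_erase (h : IsWall K D S) (hD : ∀ i, D i ⊆ S) : ∃ k ∈ K, S = K.erase k := by
  obtain ⟨k, hk, hkS⟩ := Finset.exists_of_ssubset h.ssubset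
  refine ⟨k, hk, ?_⟩
  have hsep : Separates {k} D := fun i =>
    .inr (Finset.disjoint_singleton_right.2 fun hki => hkS (hD i hki))
  rcases h.eq_of_separates {k} (Finset.singleton_subset_iff.2 hk) hsep with h' | h' | h' | h'
  · simp at h'
  · exact absurd (h' ▸ Finset.mem_singleton_self k) hkS
  · rw [← Finset.sdiff_sdiff_eq_self h.ssubset.subset, ← h', Finset.sdiff_singleton_eq_erase]
  · obtain ⟨s, hs⟩ := h.nonempty
    have : s = k := Finset.mem_singleton.1 (h' ▸ h.ssubset.subset hs)
    exact absurd (this ▸ hs) hkS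

lemma refineBy_singleton_eq_of_le (hDV : D ≤ V) (hS : Separates S D)
    (hV : ∀ i, V i = D i ∨ (D i).Nonempty ∧ D i ⊆ S ∧ V i ∩ S ⊆ D i) : refineBy {S} V = D := by
  ext i k
  rw [mem_refineBy_singleton]
  rcases hV i with hi | ⟨⟨x, hx⟩, hDS, hVS⟩
  · rw [hi, and_iff_left_iff_imp]
    rintro hk ⟨x, hx⟩
    rw [Finset.mem_inter] at hx
    exact (hS i).resolve_right (fun h => Finset.disjoint_left.1 h hx.1 hx.2) hk
  · exact ⟨fun ⟨hk, hkS⟩ => hVS (Finset.mem_inter.2 ⟨hk, hkS ⟨x, Finset.mem_inter.2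
      ⟨hDV i hx, hDS hx⟩⟩⟩), fun hk => ⟨hDV i hk, fun _ => hDS hk⟩⟩

end IsWall

section Walls

variable {ι κ : Type*} [DecidableEq ι] [DecidableEq κ] {R R' : Finset ι} {K₀ K Q S : Finset κ}
  {M : Set (ι → Finset κ)} {D E V W : ι → Finset κ}

lemma IsTOMOn.refineBy_singleton_mem (hM : IsTOMOn R K₀ M) (hV : V ∈ M) (S : Finset κ) :
    refineBy {S} V ∈ M := by
  rw [refineBy_singleton]
  exact hM.minimizers_mem V hV _

/-- `V` is a vertex of the face of `M` consisting of the types with columns in `K`. -/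
structure IsVertexOn (M : Set (ι → Finset κ)) (K : Finset κ) (V : ι → Finset κ) : Prop where
  mem : V ∈ M
  subset : ∀ i, V i ⊆ K
  connected : IsConnectedOn K V

/-- The function `ξ` witnessing the compatibility of two vertices on the same side of a wall is
constant on `S` and on `K \ S`, and the rows joining `S` to `K \ S` make these constants agree. -/
lemma IsTOMOn.eq_of_refineBy_eq (hM : IsTOMOn R K₀ M) (hV : IsVertexOn M K V)
    (hW : IsVertexOn M K W) (hVW : refineBy {S} V = refineBy {S} W)
    (hwall : IsWall K (refineBy {S} V) S) : V = W := by
  obtain ⟨ξ, μ, hξV, hξW⟩ := hM.compatible V hV.mem W hW.mem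
  have hDK : ∀ i, refineBy {S} V i ⊆ K := fun i => (refineBy_le _ _ i).trans (hV.subset i)
  have hξμ : ∀ i, ∀ k ∈ refineBy {S} V i, ξ k = μ i := fun i k hk =>
    (hξW i k (refineBy_le _ _ i (hVW ▸ hk))).1.antisymm (hξV i k (refineBy_le _ _ i hk)).1
  have hξD : ∀ i, ∀ k ∈ refineBy {S} V i, ∀ l ∈ refineBy {S} V i, ξ k = ξ l := fun i k hk l hl =>
    (hξμ i k hk).trans (hξμ i l hl).symm
  obtain ⟨i, s, hs, t, ht, hsS, htS⟩ :=
    hV.connected.exists_mem_mem_sdiff hV.subset hwall.nonempty hwall.ssubset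
  obtain ⟨i', s', hs', t', ht', hsS', htS'⟩ :=
    hW.connected.exists_mem_mem_sdiff hW.subset hwall.nonempty hwall.ssubset
  have hst : ξ s ≤ ξ t := (hξμ i s (mem_refineBy_singleton.2 ⟨hs, fun _ => hsS⟩)).le.trans
    (hξV i t ht).1
  have hts : ξ t' ≤ ξ s' := (hξW i' t' ht').1.trans
    (hξμ i' s' (hVW ▸ mem_refineBy_singleton.2 ⟨hs', fun _ => hsS'⟩)).ge
  have hξS : ∀ k ∈ S, ξ k = ξ s := fun k hk => hwall.apply_eq hDK hξD hk hsS
  have hξt : ∀ k ∈ K \ S, ξ k = ξ t := fun k hk => (hwall.sdiff hDK).apply_eq hDK hξD hk htS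
  have hξK : ∀ k ∈ K, ξ k = ξ s := fun k hk => by
    by_cases hkS : k ∈ S
    · exact hξS k hkS
    · have := hξt k (Finset.mem_sdiff.2 ⟨hk, hkS⟩)
      have := hξt t' htS'
      have := hξS s' hsS'
      omega
  funext i
  by_cases hi : i ∈ R
  · obtain ⟨k, hk⟩ := hM.nonempty _ (hM.refineBy_singleton_mem hV.mem S) i hi
    have hμ : μ i = ξ s := (hξμ i k hk).symm.trans (hξK k (hDK i hk))
    exact Finset.Subset.antisymm
      (fun x hx => (hξV i x hx).2 (hμ.trans (hξK x (hV.subset i hx)).symm))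
      fun x hx => (hξW i x hx).2 ((hξK x (hW.subset i hx)).trans hμ.symm)
  · rw [hM.eq_empty V hV.mem i hi, hM.eq_empty W hW.mem i hi]

lemma IsTOMOn.exists_eqOn_of_saturated (hM : IsTOMOn R K₀ M) (hR : R' ⊆ R) (hQ : Q ⊆ K₀)
    (hsat : Saturated R' Q) (hD : D ∈ M) (hDQ : ∀ i ∈ R', D i ⊆ Q) :
    ∃ E ∈ M, (∀ i, E i ⊆ Q) ∧ ∀ i ∈ R', E i = D i := by
  obtain ⟨E, hE, hEQ, hDE⟩ := hsat _ (hM.restrict hR hQ) (restrictRows R' D)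
    (fun i k hk => hDQ i (mem_restrictRows.1 hk).1 (mem_restrictRows.1 hk).2)
    (fun i hi => restrictRows_of_mem (A := D) hi ▸ hM.nonempty D hD i (hR hi))
    (fun i hi => restrictRows_of_notMem hi)
    (by rintro _ ⟨E, hE, -, rfl⟩; exact (hM.compatible D hD E hE).restrictRows)
  refine ⟨E, hE, hEQ, fun i hi => ?_⟩
  rw [← restrictRows_of_mem (A := E) hi, ← hDE, restrictRows_of_mem hi]

/-- Eliminating with `D` in a row of `W` that does not yet contain the one of `D` brings `W`
closer to containing `D`. -/
lemma IsTOMOn.exists_ge_of_subset_union (hM : IsTOMOn R K₀ M) (hD : D ∈ M) (hW : W ∈ M)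
    (hWD : ∀ i, W i = D i ∨ D i ⊆ S ∧ W i ⊆ D i ∪ Q)
    (hlost : ∀ i, ¬ D i ⊆ W i → W i ⊆ Q) (hmeet : ∃ i, D i ⊆ S ∧ ∃ q ∈ W i, q ∈ Q) :
    ∃ V ∈ M, D ≤ V ∧ (∀ i, V i = D i ∨ D i ⊆ S ∧ V i ⊆ D i ∪ Q) ∧
      ∃ i, D i ⊆ S ∧ ∃ q ∈ V i, q ∈ Q := by
  induction hm : ({i ∈ R | ¬ D i ⊆ W i} : Finset ι).card using Nat.strong_induction_on
    generalizing W with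
  | h m ih =>
  by_cases hDW : D ≤ W
  · exact ⟨W, hW, hDW, hWD, hmeet⟩
  obtain ⟨j, hj⟩ := not_forall.1 hDW
  have hjR : j ∈ R := by
    by_contra hjR
    exact hj (by simp [hM.eq_empty D hD j hjR])
  have hDj : D j ⊆ S := ((hWD j).resolve_left fun h => hj h.ge).1
  obtain ⟨C, hC, hCj, hCi⟩ := hM.elimination D hD W hW j hjR
  have hCW : ∀ i, ¬ D i ⊆ C i → C i = W i := fun i hi => by
    rcases hCi i with h | h | h
    exacts [(hi h.ge).elim, h, (hi (h ▸ Finset.subset_union_left)).elim]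
  refine ih _ ?_ hC (fun i => ?_) (fun i hi => ?_) ?_ rfl
  · rw [← hm]
    refine Finset.card_lt_card (Finset.ssubset_iff_of_subset (fun i hi => ?_) |>.2 ⟨j, ?_, ?_⟩)
    · obtain ⟨hiR, hi⟩ := Finset.mem_filter.1 hi
      exact Finset.mem_filter.2 ⟨hiR, hCW i hi ▸ hi⟩
    · exact Finset.mem_filter.2 ⟨hjR, hj⟩
    · simp [hCj]
  · rcases hCi i with h | h | h <;> rw [h]
    · exact .inl rfl
    · exact hWD i
    · exact (hWD i).imp (fun h => by rw [h, Finset.union_self]) fun h =>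
        ⟨h.1, Finset.union_subset Finset.subset_union_left h.2⟩
  · have hCi := hCW i hi
    rw [hCi] at hi ⊢
    exact hlost i hi
  · obtain ⟨q, hq⟩ := hM.nonempty W hW j hjR
    exact ⟨j, hDj, q, hCj ▸ Finset.mem_union_right _ hq, hlost j hj hq⟩

lemma IsTOMOn.exists_ge_of_isWall (hM : IsTOMOn R K₀ M)
    (hsat : ∀ R' : Finset ι, Saturated R' (K \ S)) (hK : K ⊆ K₀) (hD : D ∈ M)
    (hDK : ∀ i, D i ⊆ K) (hwall : IsWall K D S) (hmeet : Meets D S) :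
    ∃ V ∈ M, D ≤ V ∧ (∀ i, V i = D i ∨ D i ⊆ S ∧ V i ⊆ D i ∪ K \ S) ∧
      ∃ i, D i ⊆ S ∧ ∃ q ∈ V i, q ∈ K \ S := by
  obtain ⟨E, hE, hES, hED⟩ := hM.exists_eqOn_of_saturated (R.filter_subset fun i => ¬ D i ⊆ S)
    (Finset.sdiff_subset.trans hK) (hsat _) hD fun i hi => Finset.subset_sdiff.2
      ⟨hDK i, (hwall.separates i).resolve_left (Finset.mem_filter.1 hi).2⟩
  have hrow : ∀ i, E i = D i ∨ D i ⊆ S := fun i => by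
    by_cases hiS : D i ⊆ S
    · exact .inr hiS
    by_cases hiR : i ∈ R
    · exact .inl (hED i (Finset.mem_filter.2 ⟨hiR, hiS⟩))
    · exact .inl ((hM.eq_empty E hE i hiR).trans (hM.eq_empty D hD i hiR).symm)
  refine hM.exists_ge_of_subset_union hD hE
    (fun i => (hrow i).imp_right fun h => ⟨h, (hES i).trans Finset.subset_union_right⟩)
    (fun i _ => hES i) ?_
  obtain ⟨i, k, hk, hkS⟩ := hmeet
  have hiR : i ∈ R := by
    by_contra hiR
    simp [hM.eq_empty D hD i hiR] at hk
  obtain ⟨q, hq⟩ := hM.nonempty E hE i hiR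
  refine ⟨i, (hrow i).resolve_left fun h => ?_, q, hq, hES i hq⟩
  exact (Finset.mem_sdiff.1 (hES i (h ▸ hk))).2 hkS

lemma IsTOMOn.exists_refineBy_eq (hM : IsTOMOn R K₀ M)
    (hsat : ∀ R' : Finset ι, Saturated R' (K \ S)) (hK : K ⊆ K₀) (hD : D ∈ M)
    (hDK : ∀ i, D i ⊆ K) (hwall : IsWall K D S) (hmeet : Meets D S) :
    ∃ V, IsVertexOn M K V ∧ refineBy {S} V = D := by
  obtain ⟨V, hV, hDV, hVD, i, hiS, q, hq, hqS⟩ :=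
    hM.exists_ge_of_isWall hsat hK hD hDK hwall hmeet
  have hiR : i ∈ R := by
    by_contra hiR
    simp [hM.eq_empty V hV i hiR] at hq
  obtain ⟨s, hs⟩ := hM.nonempty D hD i hiR
  refine ⟨V, ⟨hV, fun j => ?_, hwall.isConnectedOn_of_le hDV (hDV i hs) hq (hiS hs) hqS⟩,
    refineBy_singleton_eq_of_le hDV hwall.separates fun j => ?_⟩
  · rcases hVD j with h | h
    · exact h ▸ hDK j
    · exact h.2.trans (Finset.union_subset (hDK j) Finset.sdiff_subset)
  · by_cases hjR : j ∈ R
    · refine (hVD j).imp_right fun h => ⟨hM.nonempty D hD j hjR, h.1, fun k hk => ?_⟩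
      obtain ⟨hk, hkS⟩ := Finset.mem_inter.1 hk
      exact (Finset.mem_union.1 (h.2 hk)).resolve_right fun h => (Finset.mem_sdiff.1 h).2 hkS
    · exact .inl ((hM.eq_empty V hV j hjR).trans (hM.eq_empty D hD j hjR).symm)

end Walls

/-! ### The fundamental chain of a face -/

section FundamentalChain

variable {ι κ X : Type*} [Finite ι] [Finite κ] {K : Finset κ} {M : Set (ι → Finset κ)}
  {D V : ι → Finset κ} {pt : (ι → Finset κ) → X}

/-- The vertices of the face of `M` spanned by the columns `K`. -/
def vertices (M : Set (ι → Finset κ)) (K : Finset κ) : Finset (ι → Finset κ) :=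
  (Set.toFinite {V | IsVertexOn M K V}).toFinset

lemma mem_vertices : V ∈ vertices M K ↔ IsVertexOn M K V := by
  simp [vertices]

variable [DecidableEq X]

/-- The empty simplex and the simplices spanned by chains of types refining a vertex of the face
`K` of `M`. -/
def cellSimplices (M : Set (ι → Finset κ)) (pt : (ι → Finset κ) → X) (K : Finset κ) :
    Set (Finset X) :=
  insert ∅ {σ | ∃ V ∈ vertices M K, σ ∈ chainSimplices M pt V}

lemma finite_cellSimplices (M : Set (ι → Finset κ)) (pt : (ι → Finset κ) → X) (K : Finset κ) :
    (cellSimplices M pt K).Finite := by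
  refine ((Set.finite_range (Finset.image pt)).insert ∅).subset (Set.insert_subset_insert ?_)
  rintro σ ⟨V, -, F, rfl, -⟩
  exact ⟨F, rfl⟩

variable [DecidableEq κ]

/-- The sum of all maximal simplices in the barycentric subdivision of the face `K` of `M`; the
empty face gives the empty simplex. -/
def fundamentalChain (M : Set (ι → Finset κ)) (pt : (ι → Finset κ) → X) (K : Finset κ) : Chain X :=
  if K = ∅ then simplex ∅ else ∑ V ∈ vertices M K, flagChain K pt V (K.card - 1) ∅

lemma fundamentalChain_empty : fundamentalChain M pt ∅ = simplex ∅ := if_pos rfl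

lemma fundamentalChain_of_nonempty (hK : K.Nonempty) :
    fundamentalChain M pt K = ∑ V ∈ vertices M K, flagChain K pt V (K.card - 1) ∅ :=
  if_neg hK.ne_empty

/-- The pairs `(S, D)` of a wall `D` in the face `K` of `M` and a side `S` of it met by `D`. -/
def walls (M : Set (ι → Finset κ)) (K : Finset κ) : Finset (Finset κ × (ι → Finset κ)) :=
  (Set.toFinite {p | p.2 ∈ M ∧ (∀ i, p.2 i ⊆ K) ∧ IsWall K p.2 p.1 ∧ Meets p.2 p.1}).toFinset

lemma mem_walls {S : Finset κ} :
    (S, D) ∈ walls M K ↔ D ∈ M ∧ (∀ i, D i ⊆ K) ∧ IsWall K D S ∧ Meets D S := by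
  simp only [walls, Set.Finite.mem_toFinset, Set.mem_ofPred_eq]

open scoped Classical in
/-- The two sides of an interior wall contribute the same chain. -/
lemma sum_flagChain_interior_walls (r : ℕ) :
    ∑ p ∈ walls M K with Meets p.2 (K \ p.1), flagChain K pt p.2 r {p.1} = 0 := by
  refine Finset.sum_involution (fun p _ => (K \ p.1, p.2)) ?_ ?_ ?_ ?_ <;>
    rintro ⟨S, D⟩ hp <;> obtain ⟨hp, hmeet'⟩ := Finset.mem_filter.1 hp <;>
    obtain ⟨hD, hDK, hwall, hmeet⟩ := mem_walls.1 hp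
  · rw [flagChain_sdiff hwall.separates hDK
      (isFlag_singleton_of_mem_extensions_empty hwall.mem_extensions_empty), ZModModule.add_self]
  · exact fun _ h => sdiff_ne_self hwall.nonempty (congrArg Prod.fst h)
  · refine Finset.mem_filter.2 ⟨mem_walls.2 ⟨hD, hDK, hwall.sdiff hDK, hmeet'⟩, ?_⟩
    simpa only [Finset.sdiff_sdiff_eq_self hwall.ssubset.subset] using hmeet
  · simp only [Finset.sdiff_sdiff_eq_self hwall.ssubset.subset]

variable [DecidableEq ι] {R : Finset ι} {K₀ : Finset κ}

lemma IsTOMOn.mk_erase_mem_walls (hM : IsTOMOn R K₀ M) (hR : R.Nonempty) (hK : K.Nontrivial) {k : κ}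
    (hk : k ∈ K) (hD : IsVertexOn M (K.erase k) D) : (K.erase k, D) ∈ walls M K := by
  refine mem_walls.2 ⟨hD.mem, fun i => (hD.subset i).trans (Finset.erase_subset _ _),
    (isWall_erase_iff hk (hK.erase_nonempty) hD.subset).2 hD.connected, ?_⟩
  obtain ⟨i, hi⟩ := hR
  obtain ⟨x, hx⟩ := hM.nonempty D hD.mem i hi
  exact ⟨i, x, hx, hD.subset i hx⟩

open scoped Classical in
/-- A wall all of whose columns lie on one side is a vertex of a facet of the face `K`. -/
lemma IsTOMOn.sum_flagChain_boundary_walls (hM : IsTOMOn R K₀ M) (hR : R.Nonempty)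
    (hK : K.Nontrivial) :
    ∑ p ∈ walls M K with ¬ Meets p.2 (K \ p.1), flagChain K pt p.2 (K.card - 2) {p.1} =
      ∑ k ∈ K, fundamentalChain M pt (K.erase k) := by
  rw [Finset.sum_congr rfl fun k _ =>
    fundamentalChain_of_nonempty (hK.erase_nonempty), Finset.sum_sigma']
  symm
  refine Finset.sum_bij (fun p _ => (K.erase p.1, p.2)) ?_ ?_ ?_ ?_
  · rintro ⟨k, D⟩ hp
    obtain ⟨hk, hD⟩ := Finset.mem_sigma.1 hp
    have hD := mem_vertices.1 hD
    refine Finset.mem_filter.2 ⟨hM.mk_erase_mem_walls hR hK hk hD, ?_⟩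
    rintro ⟨i, x, hx, hxK⟩
    exact (Finset.mem_sdiff.1 hxK).2 (hD.subset i hx)
  · rintro ⟨k, D⟩ hp ⟨l, E⟩ hq heq
    obtain ⟨herase, rfl⟩ := Prod.mk.inj heq
    obtain rfl := Finset.erase_injOn K (Finset.mem_sigma.1 hp).1 (Finset.mem_sigma.1 hq).1 herase
    rfl
  · rintro ⟨S, D⟩ hp
    obtain ⟨hp, hmeet⟩ := Finset.mem_filter.1 hp
    obtain ⟨hD, hDK, hwall, -⟩ := mem_walls.1 hp
    have hDS : ∀ i, D i ⊆ S := fun i x hx => by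
      by_contra hxS
      exact hmeet ⟨i, x, hx, Finset.mem_sdiff.2 ⟨hDK i hx, hxS⟩⟩
    obtain ⟨k, hk, rfl : S = K.erase k⟩ := hwall.exists_eq_erase hDS
    exact ⟨⟨k, D⟩, Finset.mem_sigma.2 ⟨hk, mem_vertices.2 ⟨hD, hDS,
      (isWall_erase_iff hk hwall.nonempty hDS).1 hwall⟩⟩, rfl⟩
  · rintro ⟨k, D⟩ hp
    obtain ⟨hk, hD⟩ := Finset.mem_sigma.1 hp
    rw [Finset.card_erase_of_mem hk, Nat.sub_sub, ← flagChain_insert_erase hk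
      (hK.erase_nonempty) (mem_vertices.1 hD).subset (isFlag_empty _)]
    rfl

lemma IsTOMOn.mem_walls_of_isVertexOn (hM : IsTOMOn R K₀ M) {S : Finset κ} (hV : IsVertexOn M K V)
    (hwall : IsWall K (refineBy {S} V) S) : (S, refineBy {S} V) ∈ walls M K := by
  refine mem_walls.2 ⟨hM.refineBy_singleton_mem hV.mem S,
    fun i => (refineBy_le _ _ i).trans (hV.subset i), hwall, ?_⟩
  obtain ⟨i, s, hs, -, -, hsS, -⟩ :=
    hV.connected.exists_mem_mem_sdiff hV.subset hwall.nonempty hwall.ssubset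
  exact ⟨i, s, mem_refineBy_singleton.2 ⟨hs, fun _ => hsS⟩, hsS⟩

/-- Each wall bounds exactly one vertex on each side. -/
lemma IsTOMOn.sum_flagChain_vertices (hM : IsTOMOn R K₀ M)
    (hsat : ∀ Q : Finset κ, Q.Nonempty → Q ⊂ K₀ → ∀ R' : Finset ι, Saturated R' Q) (hK : K ⊆ K₀) :
    ∑ V ∈ vertices M K, ∑ S ∈ extensions K ∅, flagChain K pt V (K.card - 2) {S} =
      ∑ p ∈ walls M K, flagChain K pt p.2 (K.card - 2) {p.1} := by
  have hflag : ∀ V, ∀ S ∈ extensions K ∅, flagChain K pt V (K.card - 2) {S} =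
      flagChain K pt (refineBy {S} V) (K.card - 2) {S} := fun V S hS =>
    (flagChain_refineBy_singleton (isFlag_singleton_of_mem_extensions_empty hS)
      (Finset.mem_singleton_self S) _).symm
  have hwall : ∀ {V S}, V ∈ vertices M K → S ∈ extensions K ∅ →
      flagChain K pt V (K.card - 2) {S} ≠ 0 → IsWall K (refineBy {S} V) S := fun hV hS hne => by
    by_contra h
    exact hne (flagChain_eq_zero_of_not_isWall (mem_vertices.1 hV).subset hS h)
  rw [← Finset.sum_product']
  refine Finset.sum_bij_ne_zero (fun p _ _ => (p.2, refineBy {p.2} p.1)) ?_ ?_ ?_ ?_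
  · rintro ⟨V, S⟩ hp hne
    obtain ⟨hV, hS⟩ := Finset.mem_product.1 hp
    exact hM.mem_walls_of_isVertexOn (mem_vertices.1 hV) (hwall hV hS hne)
  · rintro ⟨V, S⟩ hp hne ⟨W, T⟩ hq - heq
    obtain ⟨rfl : S = T, hVW⟩ := Prod.mk.inj heq
    obtain ⟨hV : V ∈ _, hS⟩ := Finset.mem_product.1 hp
    rw [hM.eq_of_refineBy_eq (mem_vertices.1 hV) (mem_vertices.1 (Finset.mem_product.1 hq).1) hVW
      (hwall hV hS hne)]
  · rintro ⟨S, D⟩ hp hne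
    obtain ⟨hD, hDK, hwall, hmeet⟩ := mem_walls.1 hp
    have hQ := hwall.sdiff hDK
    obtain ⟨V, hV, rfl⟩ := hM.exists_refineBy_eq
      (hsat _ hQ.nonempty (hQ.ssubset.trans_subset hK)) hK hD hDK hwall hmeet
    exact ⟨(V, S), Finset.mem_product.2 ⟨mem_vertices.2 hV, hwall.mem_extensions_empty⟩,
      by rwa [hflag V S hwall.mem_extensions_empty], rfl⟩
  · rintro ⟨V, S⟩ hp -
    exact hflag V S (Finset.mem_product.1 hp).2

lemma IsTOMOn.vertices_singleton (hM : IsTOMOn R K₀ M) {k : κ} (hk : k ∈ K₀) :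
    vertices M {k} = {fun i => if i ∈ R then {k} else ∅} := by
  ext V
  rw [mem_vertices, Finset.mem_singleton]
  constructor
  · intro hV
    funext i
    split_ifs with hi
    · exact (hM.nonempty V hV.mem i hi).subset_singleton_iff.1 (hV.subset i)
    · exact hM.eq_empty V hV.mem i hi
  · rintro rfl
    refine ⟨hM.boundary k hk, fun i => ?_, fun Z hZ _ => Finset.subset_singleton_iff.1 hZ⟩
    split_ifs <;> simp

lemma boundary_fundamentalChain (hM : IsTOMOn R K₀ M) (hR : R.Nonempty)
    (hsat : ∀ Q : Finset κ, Q.Nonempty → Q ⊂ K₀ → ∀ R' : Finset ι, Saturated R' Q) (hK : K ⊆ K₀)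
    (hne : K.Nonempty) :
    boundary (fundamentalChain M pt K) = ∑ k ∈ K, fundamentalChain M pt (K.erase k) := by
  classical
  rcases hne.exists_eq_singleton_or_nontrivial with ⟨k, rfl⟩ | hnt
  · simp [fundamentalChain, flagChain, hM.vertices_singleton (Finset.singleton_subset_iff.1 hK)]
  · have htwo : 2 ≤ K.card := Finset.one_lt_card_iff_nontrivial.2 hnt
    have hbd : ∀ V ∈ vertices M K, boundary (flagChain K pt V (K.card - 1) ∅) =
        ∑ S ∈ extensions K ∅, flagChain K pt V (K.card - 2) {S} := fun V _ => by
      rw [show K.card - 1 = K.card - 2 + 1 by omega,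
        boundary_flagChain (isFlag_empty K) (by rw [Finset.card_empty]; omega)]
      rfl
    rw [fundamentalChain_of_nonempty hne, map_sum, Finset.sum_congr rfl hbd,
      hM.sum_flagChain_vertices hsat hK,
      ← Finset.sum_filter_add_sum_filter_not _ fun p => Meets p.2 (K \ p.1),
      sum_flagChain_interior_walls, zero_add, hM.sum_flagChain_boundary_walls hR hnt]

lemma IsTOMOn.fundamentalChain_mem_chainsIn (hM : IsTOMOn R K₀ M) (K : Finset κ) :
    fundamentalChain M pt K ∈ chainsIn (cellSimplices M pt K) := by
  rcases K.eq_empty_or_nonempty with rfl | hK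
  · rw [fundamentalChain_empty]
    exact simplex_mem_chainsIn (Set.mem_insert _ _)
  · rw [fundamentalChain_of_nonempty hK]
    refine Submodule.sum_mem _ fun V hV => ?_
    have hflag := flagChain_mem_chainsIn (K := K) (pt := pt) (V := V) (c := ∅) (r := K.card - 1)
      (fun A hA U => hM.refineBy_singleton_mem hA U)
      (by rw [refineBy_empty]; exact (mem_vertices.1 hV).mem)
    rw [refineBy_empty] at hflag
    exact Finsupp.supported_mono (fun σ hσ => .inr ⟨V, hV, hσ⟩) hflag

end FundamentalChain

/-! ### Saturation -/

section Saturated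

variable {ι κ : Type*} {R : Finset ι} {K : Finset κ} {M : Set (ι → Finset κ)}
  {A D E : ι → Finset κ} {k : κ}

/-- `k` is an admissible Sperner label of the type `D` relative to `A`: `D` uses the column `k`, and
does so in every row where `A` does. -/
def IsLabel (A D : ι → Finset κ) (k : κ) : Prop :=
  (∃ i, k ∈ D i) ∧ ∀ i, k ∈ A i → k ∈ D i

lemma IsLabel.mono (h : IsLabel A D k) (hDE : D ≤ E) : IsLabel A E k :=
  ⟨h.1.imp fun i hi => hDE i hi, fun i hi => hDE i (h.2 i hi)⟩

lemma exists_isLabel [Finite κ] (hR : R.Nonempty) (hA : ∀ i ∈ R, (A i).Nonempty)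
    (hA' : ∀ i ∉ R, A i = ∅) (hD : ∀ i ∈ R, (D i).Nonempty) (h : Compatible A D) :
    ∃ k, IsLabel A D k := by
  obtain ⟨ξ, μ, hAξ, hDξ⟩ := h
  obtain ⟨i₀, hi₀⟩ := hR
  obtain ⟨k₀, hk₀⟩ := hA i₀ hi₀
  obtain ⟨k, ⟨i₁, hk⟩, hmin⟩ :=
    Set.exists_min_image {k | ∃ i, k ∈ A i} ξ (Set.toFinite _) ⟨k₀, i₀, hk₀⟩
  by_cases hkD : ∀ i, k ∈ A i → k ∈ D i
  · exact ⟨k, ⟨i₁, hkD i₁ hk⟩, hkD⟩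
  · push Not at hkD
    obtain ⟨i, hkA, hkD⟩ := hkD
    have hi : i ∈ R := by
      by_contra hi
      simp [hA' i hi] at hkA
    obtain ⟨x, hx⟩ := hD i hi
    have hlt : μ i < ξ k := (hAξ i k hkA).1.lt_of_ne fun h => hkD ((hAξ i k hkA).2 h)
    have hxA : ¬ ∃ i, x ∈ A i := fun hxA => ((hDξ i x hx).1.trans_lt hlt).not_ge (hmin x hxA)
    exact ⟨x, ⟨i, hx⟩, fun j hj => absurd ⟨j, hj⟩ hxA⟩

variable [Finite ι] [Finite κ] [DecidableEq ι] [DecidableEq κ]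

/-- Sperner's lemma applied to an admissible labelling yields a cell all of whose columns are
labels of its vertex. -/
lemma exists_forall_isLabel (hM : IsTOMOn R K M) (hR : R.Nonempty) (hK : K.Nonempty)
    (hsat : ∀ Q, Q.Nonempty → Q ⊂ K → ∀ R' : Finset ι, Saturated R' Q)
    (hlabel : ∀ D ∈ M, ∃ k, IsLabel A D k) : ∃ V ∈ M, ∀ k ∈ K, IsLabel A V k := by
  classical
  obtain ⟨k₀, hk₀⟩ := hK
  have hlabel' (D : ι → Finset κ) : ∃ k, D ∈ M → IsLabel A D k := by
    by_cases hD : D ∈ M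
    · exact (hlabel D hD).imp fun k hk _ => hk
    · exact ⟨k₀, fun h => absurd h hD⟩
  choose label hlabel' using hlabel'
  have himage_subset (K' : Finset κ) :
      cellSimplices M id K' ⊆ {σ | σ.image label ⊆ K'} := by
    rintro σ (rfl | ⟨V, hV, F, rfl, -, hF⟩)
    · simp
    · refine Finset.image_subset_iff.2 fun D hD => ?_
      rw [Finset.image_id] at hD
      obtain ⟨i, hi⟩ := (hlabel' D (hF D hD).1).1
      exact (mem_vertices.1 hV).subset i ((hF D hD).2 i hi)
  obtain ⟨σ, rfl | ⟨V, hV, F, rfl, -, hF⟩, himage⟩ := exists_image_eq_of_boundary_eq_sum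
    (f := label) (Z := fundamentalChain M id) (K₀ := K) fundamentalChain_empty
    (fun K' hK' hne => boundary_fundamentalChain hM hR hsat hK' hne)
    (fun K' _ => Finsupp.supported_mono (himage_subset K') (hM.fundamentalChain_mem_chainsIn K'))
    (hM.fundamentalChain_mem_chainsIn K)
  · simp [← himage] at hk₀
  · refine ⟨V, (mem_vertices.1 hV).mem, fun k hk => ?_⟩
    simp only [← himage, Finset.image_id, Finset.mem_image] at hk
    obtain ⟨D, hD, rfl⟩ := hk
    exact (hlabel' D (hF D hD).1).mono (hF D hD).2

theorem saturated (hK : K.Nonempty) (R : Finset ι) : Saturated R K := by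
  induction K using Finset.strongInduction generalizing R with
  | H K ih =>
  intro M hM A hAK hne hempty hcomp
  rcases R.eq_empty_or_nonempty with rfl | hR
  · obtain ⟨k, hk⟩ := hK
    convert hM.boundary k hk using 1
    exact funext fun i => by simp [hempty]
  · obtain ⟨V, hV, hlabel⟩ := exists_forall_isLabel hM hR hK (fun Q hQ hQK => ih Q hQK hQ)
      fun D hD => exists_isLabel hR hne hempty (hM.nonempty D hD) (hcomp D hD)
    exact hM.mem_of_le_of_compatible hV (fun i k hk => (hlabel k (hAK i hk)).2 i hk)
      (hcomp V hV) hne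

end Saturated

/-! ### Weighted averages of compatibility certificates -/

section Average

variable {X : Type*} {p : X → ℝ} {x y : X → ℤ}

lemma mul_le_mul_of_le_on_support (hp : ∀ D, 0 ≤ p D) (hxy : ∀ D, p D ≠ 0 → x D ≤ y D) (D : X) :
    p D * x D ≤ p D * y D := by
  by_cases hD : p D = 0
  · simp [hD]
  · exact mul_le_mul_of_nonneg_left (Int.cast_le.2 (hxy D hD)) (hp D)

variable [Fintype X]

/-- The average of integers `x` with respect to weights `p`. -/
def average (p : X → ℝ) (x : X → ℤ) : ℝ := ∑ D, p D * x D

lemma continuous_average (x : X → ℤ) : Continuous fun p => average p x :=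
  continuous_finsetSum _ fun D _ => (continuous_apply D).mul continuous_const

lemma average_le_average (hp : ∀ D, 0 ≤ p D) (hxy : ∀ D, p D ≠ 0 → x D ≤ y D) :
    average p x ≤ average p y :=
  Finset.sum_le_sum fun D _ => mul_le_mul_of_le_on_support hp hxy D

lemma eq_of_average_eq_average (hp : ∀ D, 0 ≤ p D) (hxy : ∀ D, p D ≠ 0 → x D ≤ y D)
    (h : average p x = average p y) {D : X} (hD : p D ≠ 0) : x D = y D := by
  have hterm := (Finset.sum_eq_sum_iff_of_le fun D _ =>
    mul_le_mul_of_le_on_support hp hxy D).1 h D (Finset.mem_univ D)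
  exact Int.cast_injective (mul_left_cancel₀ hD hterm)

lemma exists_ne_zero_of_mem_stdSimplex (hp : p ∈ stdSimplex ℝ X) : ∃ D, p D ≠ 0 := by
  by_contra! h
  simpa [h] using hp.2

lemma average_lt_average (hp : p ∈ stdSimplex ℝ X) (hxy : ∀ D, p D ≠ 0 → x D < y D) :
    average p x < average p y := by
  have hle : ∀ D, p D ≠ 0 → x D ≤ y D := fun D hD => (hxy D hD).le
  obtain ⟨D, hD⟩ := exists_ne_zero_of_mem_stdSimplex hp
  exact (average_le_average hp.1 hle).lt_of_ne fun h =>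
    (hxy D hD).ne (eq_of_average_eq_average hp.1 hle h hD)

end Average

section Certificate

variable {ι κ : Type*} {A D : ι → Finset κ} {ξ : κ → ℤ} {μ : ι → ℤ}

/-- A certificate `(ξ, μ)` of `Compatible A D` in which the columns unused by `D` are heavier than
the columns used by `D`. -/
structure IsCertificate (A D : ι → Finset κ) (ξ : κ → ℤ) (μ : ι → ℤ) : Prop where
  left : ∀ i, ∀ k ∈ A i, μ i ≤ ξ k ∧ (μ i = ξ k → k ∈ D i)
  right : ∀ i, ∀ k ∈ D i, ξ k ≤ μ i ∧ (ξ k = μ i → k ∈ A i)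
  lt_of_unused : ∀ k, (∀ i, k ∉ D i) → ∀ i, ∀ k' ∈ D i, ξ k' < ξ k

lemma Compatible.exists_isCertificate [Finite ι] [Finite κ] (h : Compatible A D) :
    ∃ ξ μ, IsCertificate A D ξ μ := by
  classical
  obtain ⟨ξ, μ, hA, hD⟩ := h
  obtain ⟨N, hN⟩ := (Set.finite_range (Sum.elim ξ μ)).bddAbove
  have hξ (k) : ξ k < N + 1 := Int.lt_add_one_of_le (hN ⟨.inl k, rfl⟩)
  have hμ (i) : μ i < N + 1 := Int.lt_add_one_of_le (hN ⟨.inr i, rfl⟩)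
  refine ⟨fun k => if ∃ i, k ∈ D i then ξ k else N + 1, μ, fun i k hk => ?_, fun i k hk => ?_,
    fun k hk i k' hk' => ?_⟩
  · split_ifs
    · exact hA i k hk
    · exact ⟨(hμ i).le, fun h => absurd h (hμ i).ne⟩
  · rw [if_pos ⟨i, hk⟩]
    exact hD i k hk
  · rw [if_pos ⟨i, hk'⟩, if_neg (not_exists.2 hk)]
    exact hξ k'

variable [DecidableEq κ]

/-- In every row where `A` meets the columns `S`, the type `D` agrees with the restriction of `A`
to `S`. -/
def AgreesOn (S : Finset κ) (A D : ι → Finset κ) : Prop :=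
  ∀ i, (A i ∩ S).Nonempty → D i = A i ∩ S

lemma AgreesOn.union_inter_eq {S T : Finset κ} {B D : ι → Finset κ} (hS : AgreesOn S A D)
    (hT : AgreesOn T B D) (i : ι) (hne : (A i ∩ S ∪ B i ∩ T).Nonempty) :
    A i ∩ S ∪ B i ∩ T = D i := by
  rcases Finset.eq_empty_or_nonempty (A i ∩ S) with hA | hA
  · rw [hA, Finset.empty_union] at hne ⊢
    exact (hT i hne).symm
  · rw [hS i hA]
    refine Finset.union_eq_left.2 ?_
    rcases Finset.eq_empty_or_nonempty (B i ∩ T) with hB | hB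
    · simp [hB]
    · exact ((hT i hB).symm.trans (hS i hA)).subset

/-- Averaging the inequalities `ξ k' ≤ μ i ≤ ξ k` forces equality throughout when `k` has minimal
average weight. -/
lemma agreesOn_of_minimal_average {X : Type*} [Fintype X] [Fintype κ] {p : X → ℝ}
    (hp : ∀ x, 0 ≤ p x) {D : X → ι → Finset κ} {ξ : X → κ → ℤ} {μ : X → ι → ℤ}
    (hcert : ∀ x, p x ≠ 0 → IsCertificate A (D x) (ξ x) (μ x)) {x₀ : X} (hx₀ : p x₀ ≠ 0)
    (hleast : ∀ x, p x ≠ 0 → D x₀ ≤ D x) (hne : ∀ i, (D x₀ i).Nonempty) {c : ℝ}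
    (hc : ∀ k, c ≤ average p (ξ · k)) :
    AgreesOn {k | average p (ξ · k) = c} A (D x₀) := by
  rintro i ⟨k, hk⟩
  simp only [Finset.mem_inter, Finset.mem_filter_univ] at hk
  obtain ⟨k₀, hk₀⟩ := hne i
  have hright {k'} (hk' : k' ∈ D x₀ i) (x) (hx : p x ≠ 0) : ξ x k' ≤ μ x i :=
    ((hcert x hx).right i k' (hleast x hx i hk')).1
  have hleft {k} (hkA : k ∈ A i) (x) (hx : p x ≠ 0) : μ x i ≤ ξ x k := ((hcert x hx).left i k hkA).1
  have hμ : average p (μ · i) = c := le_antisymm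
    ((average_le_average hp (hleft hk.1)).trans_eq hk.2)
    ((hc k₀).trans (average_le_average hp (hright hk₀)))
  ext k'
  simp only [Finset.mem_inter, Finset.mem_filter_univ]
  constructor
  · intro hk'
    have heq : average p (ξ · k') = c :=
      le_antisymm ((average_le_average hp (hright hk')).trans_eq hμ) (hc k')
    exact ⟨((hcert x₀ hx₀).right i k' hk').2
      (eq_of_average_eq_average hp (hright hk') (heq.trans hμ.symm) hx₀), heq⟩
  · rintro ⟨hk'A, heq⟩
    exact ((hcert x₀ hx₀).left i k' hk'A).2
      (eq_of_average_eq_average hp (hleft hk'A) (hμ.trans heq.symm) hx₀)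

end Certificate

/-! ### A Knaster–Kuratowski–Mazurkiewicz lemma for tropical oriented matroids -/

section TypeKKM

variable {X : Type*} [Fintype X] [DecidableEq X]

lemma mem_stdSimplex_of_mem_convexHull_single {F : Finset X} {p : X → ℝ}
    (hp : p ∈ convexHull ℝ ((fun D => Pi.single D (1 : ℝ)) '' (F : Set X))) :
    p ∈ stdSimplex ℝ X ∧ ∀ D ∉ F, p D = 0 := by
  have hconv : Convex ℝ (stdSimplex ℝ X ∩ {p | ∀ D ∉ F, p D = 0}) := by
    refine (convex_stdSimplex ℝ X).inter fun x hx y hy a b _ _ _ D hD => ?_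
    simp [hx D hD, hy D hD]
  refine convexHull_min ?_ hconv hp
  rintro _ ⟨D, hD, rfl⟩
  exact ⟨single_mem_stdSimplex ℝ D,
    fun E hE => Pi.single_eq_of_ne (ne_of_mem_of_not_mem hD hE).symm 1⟩

variable {ι κ : Type*} [Fintype ι] [Fintype κ] [DecidableEq ι] [DecidableEq κ]
  {M : Set (ι → Finset κ)} {V : ι → Finset κ}

open scoped Classical in
lemma exists_least_support_of_mem_convexHull {σ : Finset ((ι → Finset κ) → ℝ)}
    (hσ : σ ∈ chainSimplices M (fun D => Pi.single D 1) V) {p : (ι → Finset κ) → ℝ}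
    (hp : p ∈ convexHull ℝ (σ : Set ((ι → Finset κ) → ℝ))) :
    p ∈ stdSimplex ℝ (ι → Finset κ) ∧ (∀ D, p D ≠ 0 → D ∈ M ∧ D ≤ V) ∧
      ∃ D₀, p D₀ ≠ 0 ∧ ∀ D, p D ≠ 0 → D₀ ≤ D := by
  obtain ⟨F, rfl, hchain, hF⟩ := hσ
  rw [Finset.coe_image] at hp
  obtain ⟨hp, hpF⟩ := mem_stdSimplex_of_mem_convexHull_single hp
  have hsupp : ∀ D, p D ≠ 0 → D ∈ F := fun D => not_imp_comm.1 (hpF D)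
  obtain ⟨D₁, hD₁⟩ := exists_ne_zero_of_mem_stdSimplex hp
  obtain ⟨D₀, hD₀⟩ := ({D | p D ≠ 0} : Finset _).exists_minimal ⟨D₁, by simpa using hD₁⟩
  have hpD₀ : p D₀ ≠ 0 := by simpa using hD₀.prop
  refine ⟨hp, fun D hD => hF D (hsupp D hD), D₀, hpD₀, fun D hD => ?_⟩
  exact (hchain.total (hsupp D₀ hpD₀) (hsupp D hD)).elim id
    (hD₀.le_of_le (by simpa using hD))

lemma IsTOMOn.exists_forall_eq [Nonempty ι] [Nonempty κ]
    (hM : IsTOMOn Finset.univ Finset.univ M) {f : κ → ((ι → Finset κ) → ℝ) → ℝ}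
    (hf : ∀ k, Continuous (f k))
    (hlt : ∀ p ∈ stdSimplex ℝ (ι → Finset κ), (∀ D, p D ≠ 0 → D ∈ M) → ∀ i k k',
      (∀ D, p D ≠ 0 → ∀ i, k ∉ D i) → (∀ D, p D ≠ 0 → k' ∈ D i) → f k' p < f k p) :
    ∃ V, IsVertexOn M Finset.univ V ∧ ∃ p ∈ stdSimplex ℝ (ι → Finset κ),
      (∀ D, p D ≠ 0 → D ∈ M ∧ D ≤ V) ∧ (∃ D₀, p D₀ ≠ 0 ∧ ∀ D, p D ≠ 0 → D₀ ≤ D) ∧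
      ∀ k k', f k p = f k' p := by
  classical
  let pt (D : ι → Finset κ) : (ι → Finset κ) → ℝ := Pi.single D 1
  obtain ⟨σ, rfl | ⟨V, hV, hσ⟩, p, hp, hmin⟩ := exists_forall_le_of_boundary_eq_sum
    (Z := fundamentalChain M pt) (S := cellSimplices M pt) fundamentalChain_empty
    (fun K hK => boundary_fundamentalChain hM Finset.univ_nonempty
      (fun Q hQ _ R' => saturated hQ R') (Finset.subset_univ K) hK)
    (fun K => hM.fundamentalChain_mem_chainsIn K) (finite_cellSimplices M pt) hf
    (by
      rintro K σ (rfl | ⟨V, hV, hσ⟩) p hp k hk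
      · simp at hp
      · obtain ⟨hp, hsupp, D₀, hD₀, hleast⟩ := exists_least_support_of_mem_convexHull hσ hp
        let i₀ : ι := Classical.arbitrary ι
        obtain ⟨k', hk'⟩ := hM.nonempty D₀ (hsupp D₀ hD₀).1 i₀ (Finset.mem_univ _)
        refine ⟨k', hlt p hp (fun D hD => (hsupp D hD).1) i₀ k k' (fun D hD i hi => ?_)
          fun D hD => hleast D hD i₀ hk'⟩
        exact hk ((mem_vertices.1 hV).subset i ((hsupp D hD).2 i hi)))
  · simp at hp
  · obtain ⟨hp, hsupp, hleast⟩ := exists_least_support_of_mem_convexHull hσ hp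
    exact ⟨V, mem_vertices.1 hV, p, hp, hsupp, hleast, fun k k' => (hmin k k').antisymm (hmin k' k)⟩

end TypeKKM

/-! ### Elimination in the dual -/

section DualElimination

variable {ι κ : Type*} [Fintype ι] [Fintype κ] [DecidableEq ι] [DecidableEq κ]
  {M : Set (ι → Finset κ)} {A B : ι → Finset κ}

/-- If the two weight averages are normalized to vanish at `j`, the KKM lemma for their minimum
gives a point where every column attains the minimum of one of them. -/
lemma IsTOMOn.exists_agreesOn [Nonempty ι] (hM : IsTOMOn Finset.univ Finset.univ M)
    (hA : ∀ D ∈ M, Compatible A D) (hB : ∀ D ∈ M, Compatible B D) (j : κ) :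
    ∃ V, IsVertexOn M Finset.univ V ∧ ∃ D ∈ M, D ≤ V ∧ ∃ S T : Finset κ, j ∈ S ∧ j ∈ T ∧
      S ∪ T = Finset.univ ∧ AgreesOn S A D ∧ AgreesOn T B D := by
  classical
  have : Nonempty κ := ⟨j⟩
  choose! ξ μ hξ using fun D hD => (hA D hD).exists_isCertificate
  choose! η ν hη using fun D hD => (hB D hD).exists_isCertificate
  let a (k : κ) (p : (ι → Finset κ) → ℝ) : ℝ := average p (ξ · k) - average p (ξ · j)
  let b (k : κ) (p : (ι → Finset κ) → ℝ) : ℝ := average p (η · k) - average p (η · j)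
  obtain ⟨V, hV, p, hp, hsupp, ⟨D, hD, hleast⟩, hmin⟩ := hM.exists_forall_eq
    (f := fun k p => min (a k p) (b k p))
    (fun k => ((continuous_average _).sub (continuous_average _)).min
      ((continuous_average _).sub (continuous_average _)))
    (fun p hp hpM i k k' hk hk' => min_lt_min
      (sub_lt_sub_right (average_lt_average hp fun D hD =>
        (hξ D (hpM D hD)).lt_of_unused k (hk D hD) i k' (hk' D hD)) _)
      (sub_lt_sub_right (average_lt_average hp fun D hD =>
        (hη D (hpM D hD)).lt_of_unused k (hk D hD) i k' (hk' D hD)) _))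
  have hzero (k : κ) : min (a k p) (b k p) = 0 := (hmin k j).trans (by simp [a, b])
  have hξmin (k : κ) : average p (ξ · j) ≤ average p (ξ · k) :=
    sub_nonneg.1 ((hzero k).symm.trans_le (min_le_left _ _))
  have hηmin (k : κ) : average p (η · j) ≤ average p (η · k) :=
    sub_nonneg.1 ((hzero k).symm.trans_le (min_le_right _ _))
  have hne (i : ι) : (D i).Nonempty := hM.nonempty D (hsupp D hD).1 i (Finset.mem_univ i)
  refine ⟨V, hV, D, (hsupp D hD).1, (hsupp D hD).2, _, _, ?_, ?_, ?_,
    agreesOn_of_minimal_average (D := id) hp.1 (fun E hE => hξ E (hsupp E hE).1) hD hleast hne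
      hξmin,
    agreesOn_of_minimal_average (D := id) hp.1 (fun E hE => hη E (hsupp E hE).1) hD hleast hne
      hηmin⟩
  · simp
  · simp
  · refine Finset.eq_univ_iff_forall.2 fun k => ?_
    simp only [Finset.mem_union, Finset.mem_filter_univ, ← sub_eq_zero (b := average p _)]
    exact (min_choice (a k p) (b k p)).imp (fun h => h.symm.trans (hzero k))
      fun h => h.symm.trans (hzero k)

variable {n d : ℕ} {C D V : Fin n → Finset (Fin d)}

/-- Raising the level of the rows that `C` leaves empty turns a certificate for `D` and `V` into a
weight whose minimizers in the columns of `V` are those of `C`. -/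
lemma exists_minimizers_dualType_eq (hDV : Compatible D V) (hle : D ≤ V)
    (hC : ∀ i, (C i).Nonempty → C i = D i) (hcol : ∀ k, ∃ i, k ∈ C i) :
    ∃ h : Fin n → ℤ, ∀ k, minimizers h (dualType V k) = dualType C k := by
  obtain ⟨ξ, μ, hD, hV⟩ := hDV
  let h (i : Fin n) : ℤ := if (C i).Nonempty then μ i else μ i + 1
  have hCD {i k} (hk : k ∈ C i) : k ∈ D i := hC i ⟨k, hk⟩ ▸ hk
  have heq {i k} (hk : k ∈ C i) : h i = ξ k :=
    (if_pos ⟨k, hk⟩ : h i = μ i).trans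
      ((hD i k (hCD hk)).1.antisymm (hV i k (hle i (hCD hk))).1)
  have hVh (i k) (hk : k ∈ V i) : ξ k ≤ h i ∧ (ξ k = h i → k ∈ C i) := by
    have hkV := hV i k hk
    by_cases hne : (C i).Nonempty
    · simp only [h, if_pos hne]
      exact ⟨hkV.1, fun e => hC i hne ▸ hkV.2 e⟩
    · simp only [h, if_neg hne]
      exact ⟨by omega, fun e => by omega⟩
  refine ⟨h, fun k => ?_⟩
  ext i
  simp only [mem_minimizers, mem_dualType]
  constructor
  · rintro ⟨hk, hmin⟩
    obtain ⟨i', hi'⟩ := hcol k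
    exact (hVh i k hk).2 ((hVh i k hk).1.antisymm (heq hi' ▸ hmin i' (hle i' (hCD hi'))))
  · exact fun hk => ⟨hle i (hCD hk), fun i' hi' => heq hk ▸ (hVh i' k hi').1⟩

end DualElimination

section TypeDim

variable {n d : ℕ} {V : Fin n → Finset (Fin d)}

lemma typeDim_eq_zero_iff_connected : typeDim V = 0 ↔ (typeGraph V).Connected := by
  rw [typeDim, sub_eq_zero, Nat.cast_eq_one, Nat.card_eq_one_iff_unique, SimpleGraph.connected_iff]
  refine and_congr ⟨fun _ v w => ?_, fun h => h.subsingleton_connectedComponent⟩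
    ⟨Nonempty.map Quot.out, Nonempty.map (typeGraph V).connectedComponentMk⟩
  exact SimpleGraph.ConnectedComponent.exact (Subsingleton.elim _ _)

lemma typeGraph_adj_of_mem {i : Fin n} {k : Fin d} (hk : k ∈ V i) :
    (typeGraph V).Adj (Sum.inl i) (Sum.inr k) := by
  simpa [typeGraph] using hk

/-- The columns reachable from a given one separate the rows of `V`. -/
lemma typeDim_eq_zero_of_isConnectedOn [NeZero d] (hV : IsConnectedOn Finset.univ V)
    (hne : ∀ i, (V i).Nonempty) : typeDim V = 0 := by
  classical
  rw [typeDim_eq_zero_iff_connected, SimpleGraph.connected_iff_exists_forall_reachable]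
  let Z : Finset (Fin d) := {k | (typeGraph V).Reachable (.inr 0) (.inr k)}
  have hZ : Separates Z V := fun i => by
    simp only [Z, Finset.subset_iff, Finset.disjoint_left, Finset.mem_filter_univ]
    refine (em ((typeGraph V).Reachable (.inr 0) (.inl i))).imp (fun h k hk => ?_)
      fun h k hk hk' => h ?_
    · exact h.trans (typeGraph_adj_of_mem hk).reachable
    · exact hk'.trans (typeGraph_adj_of_mem hk).reachable.symm
  have hcol (k : Fin d) : (typeGraph V).Reachable (.inr 0) (.inr k) := by
    have hZne : Z ≠ ∅ := Finset.ne_empty_of_mem (a := 0) (by simp [Z])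
    have hk := ((hV Z (Finset.subset_univ Z) hZ).resolve_left hZne).ge (Finset.mem_univ k)
    simpa [Z] using hk
  refine ⟨.inr 0, Sum.rec (fun i => ?_) hcol⟩
  obtain ⟨k, hk⟩ := hne i
  exact (hcol k).trans (typeGraph_adj_of_mem hk).reachable.symm

lemma exists_mem_of_typeDim_eq_zero [NeZero n] (hV : typeDim V = 0) (k : Fin d) :
    ∃ i, k ∈ V i := by
  obtain ⟨w⟩ := (typeDim_eq_zero_iff_connected.1 hV).preconnected (.inr k) (.inl 0)
  cases w with
  | cons hadj _ =>
    simp only [typeGraph, SimpleGraph.fromRel_adj] at hadj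
    grind

end TypeDim

/-! ### The dual tropical oriented matroid -/

section Dual

lemma exists_refineType_eq_minimizers {n d : ℕ} {P : List (Finset (Fin d))}
    (hP : IsOrderedPartition P) :
    ∃ h : Fin d → ℤ, ∀ A : Fin n → Finset (Fin d),
      refineType A P = fun i => minimizers h (A i) := by
  refine ⟨fun k => P.findIdx (k ∈ ·), fun A => funext fun i => ?_⟩
  rw [refineType, refineEntry_eq_minimizers (hP.2.2 ▸ Finset.subset_univ _)]
  exact minimizers_congr fun a _ b _ => Nat.cast_le.symm

variable {n d : ℕ} {M : Set (Fin n → Finset (Fin d))} {B B' : Fin d → Finset (Fin n)}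

/-- The dual `M†`, with the refinements along ordered partitions expressed through minimizers. -/
def dual (M : Set (Fin n → Finset (Fin d))) : Set (Fin d → Finset (Fin n)) :=
  {B | ∃ A ∈ M, typeDim A = 0 ∧ ∃ h : Fin n → ℤ, B = fun k => minimizers h (dualType A k)}

lemma dual_eq (M : Set (Fin n → Finset (Fin d))) :
    dual M = {B | ∃ A ∈ M, typeDim A = 0 ∧
      ∃ P : List (Finset (Fin n)), IsOrderedPartition P ∧ B = refineType (dualType A) P} := by
  ext B
  refine exists_congr fun A => and_congr_right fun _ => and_congr_right fun _ => ⟨?_, ?_⟩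
  · rintro ⟨h, rfl⟩
    obtain ⟨P, hP, hPh⟩ := exists_orderedPartition_refineEntry_eq h
    exact ⟨P, hP, funext fun k => (hPh _).symm⟩
  · rintro ⟨P, hP, rfl⟩
    obtain ⟨h, hh⟩ := exists_refineType_eq_minimizers hP
    exact ⟨h, hh _⟩

lemma nonempty_of_mem_dual [NeZero n] (hB : B ∈ dual M) (k : Fin d) : (B k).Nonempty := by
  obtain ⟨A, -, hdim, h, rfl⟩ := hB
  obtain ⟨i, hi⟩ := exists_mem_of_typeDim_eq_zero hdim k
  exact minimizers_nonempty h ⟨i, mem_dualType.2 hi⟩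

lemma IsTOMOn.compatible_dualType (hM : IsTOMOn Finset.univ Finset.univ M) (hB : B ∈ dual M)
    {D : Fin n → Finset (Fin d)} (hD : D ∈ M) : Compatible B (dualType D) := by
  obtain ⟨A, hA, -, h, rfl⟩ := hB
  exact (hM.compatible A hA D hD).dualType.minimizers_left h

lemma IsTOMOn.compatible_of_mem_dual (hM : IsTOMOn Finset.univ Finset.univ M) (hB : B ∈ dual M)
    (hB' : B' ∈ dual M) : Compatible B B' := by
  obtain ⟨A, hA, -, h, rfl⟩ := hB'
  exact ((hM.compatible_dualType hB hA).symm.minimizers_left h).symm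

lemma IsTOMOn.exists_apply_eq_univ [NeZero d] (hM : IsTOMOn Finset.univ Finset.univ M) (i : Fin n) :
    ∃ V ∈ M, V i = Finset.univ := by
  suffices ∀ K : Finset (Fin d), ∃ V ∈ M, K ⊆ V i from
    (this Finset.univ).imp fun V hV => ⟨hV.1, Finset.univ_subset_iff.1 hV.2⟩
  intro K
  induction K using Finset.induction_on with
  | empty => exact ⟨_, hM.boundary 0 (Finset.mem_univ _), Finset.empty_subset _⟩
  | insert k K _ ih =>
    obtain ⟨V, hV, hKV⟩ := ih
    obtain ⟨C, hC, hCi, -⟩ :=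
      hM.elimination V hV _ (hM.boundary k (Finset.mem_univ k)) i (Finset.mem_univ i)
    refine ⟨C, hC, Finset.insert_subset ?_ (hKV.trans ?_)⟩ <;> simp [hCi]

lemma IsTOMOn.singleton_mem_dual [NeZero d] (hM : IsTOMOn Finset.univ Finset.univ M) (i : Fin n) :
    (fun _ => {i}) ∈ dual M := by
  obtain ⟨V, hV, hVi⟩ := hM.exists_apply_eq_univ i
  have hconn : IsConnectedOn Finset.univ V := fun Z _ hZ => by
    have := hVi ▸ hZ i
    rwa [Finset.univ_subset_iff, ← Finset.top_eq_univ, top_disjoint, or_comm] at this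
  refine ⟨V, hV,
    typeDim_eq_zero_of_isConnectedOn hconn fun j => hM.nonempty V hV j (Finset.mem_univ j),
    fun j => if j = i then 0 else 1, funext fun k => ?_⟩
  ext j
  simp only [Finset.mem_singleton, mem_minimizers, mem_dualType]
  constructor
  · rintro rfl
    exact ⟨by simp [hVi], fun l _ => by rw [if_pos rfl]; positivity⟩
  · rintro ⟨-, hmin⟩
    have := hmin i (by simp [hVi])
    grind

lemma refineType_mem_dual (hB : B ∈ dual M) {P : List (Finset (Fin n))}
    (hP : IsOrderedPartition P) : refineType B P ∈ dual M := by
  obtain ⟨A, hA, hdim, h, rfl⟩ := hB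
  obtain ⟨h', hh'⟩ := exists_refineType_eq_minimizers hP
  obtain ⟨g, hg⟩ := exists_minimizers_comp h h'
  exact ⟨A, hA, hdim, g, (hh' _).trans (funext fun k => hg _)⟩

lemma IsTOMOn.exists_elimination_dual [NeZero n] (hM : IsTOMOn Finset.univ Finset.univ M)
    (hB : B ∈ dual M) (hB' : B' ∈ dual M) (j : Fin d) :
    ∃ C ∈ dual M, C j = B j ∪ B' j ∧ ∀ k, C k = B k ∨ C k = B' k ∨ C k = B k ∪ B' k := by
  have hcomp {B} (hB : B ∈ dual M) (D) (hD : D ∈ M) : Compatible (dualType B) D :=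
    dualType_dualType D ▸ (hM.compatible_dualType hB hD).dualType
  obtain ⟨V, hV, D, hD, hDV, S, T, hjS, hjT, hST, hS, hT⟩ :=
    hM.exists_agreesOn (hcomp hB) (hcomp hB') j
  have : NeZero d := ⟨j.pos.ne'⟩
  let C (i : Fin n) : Finset (Fin d) := dualType B i ∩ S ∪ dualType B' i ∩ T
  have hmem {k i} : i ∈ dualType C k ↔ i ∈ B k ∧ k ∈ S ∨ i ∈ B' k ∧ k ∈ T := by
    simp [C, mem_dualType]
  have hcover (k : Fin d) : k ∈ S ∨ k ∈ T := Finset.mem_union.1 (hST ▸ Finset.mem_univ k)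
  obtain ⟨h, hh⟩ := exists_minimizers_dualType_eq (hM.compatible D hD V hV.mem) hDV
    (hS.union_inter_eq hT) fun k => by
      obtain ⟨i, hi⟩ := nonempty_of_mem_dual hB k
      obtain ⟨i', hi'⟩ := nonempty_of_mem_dual hB' k
      exact (hcover k).elim (fun hk => ⟨i, mem_dualType.1 (hmem.2 (.inl ⟨hi, hk⟩))⟩)
        fun hk => ⟨i', mem_dualType.1 (hmem.2 (.inr ⟨hi', hk⟩))⟩
  have hdim := typeDim_eq_zero_of_isConnectedOn hV.connected
    fun i => hM.nonempty V hV.mem i (Finset.mem_univ i)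
  refine ⟨dualType C, ⟨V, hV.mem, hdim, h, funext fun k => (hh k).symm⟩, ?_, fun k => ?_⟩
  · ext i
    simp [hmem, hjS, hjT]
  · by_cases hkS : k ∈ S <;> by_cases hkT : k ∈ T
    · exact .inr (.inr (by ext i; simp [hmem, hkS, hkT]))
    · exact .inl (by ext i; simp [hmem, hkS, hkT])
    · exact .inr (.inl (by ext i; simp [hmem, hkS, hkT]))
    · exact absurd (hcover k) (by simp [hkS, hkT])

end Dual

end

end TropicalOrientedMatroid

theorem stmt_6 {n d : ℕ} (hn : 1 ≤ n) (hd : 1 ≤ d)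
    (M : Set (Fin n → Finset (Fin d))) (hM : IsTOM n d M) :
    IsTOM d n {B | ∃ A ∈ M, typeDim A = 0 ∧
      ∃ P : List (Finset (Fin n)), IsOrderedPartition P ∧ B = refineType (dualType A) P} := by
  have : NeZero n := ⟨by omega⟩
  have : NeZero d := ⟨by omega⟩
  have hM' := TropicalOrientedMatroid.isTOMOn_of_isTOM hM
  rw [← TropicalOrientedMatroid.dual_eq]
  exact ⟨fun B hB => TropicalOrientedMatroid.nonempty_of_mem_dual hB,
    hM'.singleton_mem_dual,
    fun B hB B' hB' => (hM'.compatible_of_mem_dual hB hB').compAcyclic,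
    fun B hB B' hB' => hM'.exists_elimination_dual hB hB',
    fun B hB P hP => TropicalOrientedMatroid.refineType_mem_dual hB hP⟩
end

section
/- Let d ≥ 2, let p ∈ ℝ^d have pairwise distinct coordinates, let i ∈ [d], and let J be a nonempty subset of [d]. Then H_{i,p}^+ approximates T_J if and only if i ∈ J and p_j < p_i for every j ∈ J \ {i}, i.e. if and only if i ∈ J and J ⊆ {i} ∪ {q ∈ [d] : p_q < p_i}. -/
open EMetric

/-- `m(x) = min_l x_l`, the minimum coordinate of `x`. -/
noncomputable def minCoord {d : ℕ} (x : EuclideanSpace ℝ (Fin d)) : ℝ :=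
  sInf (Set.range fun l => x l)

/-- `T_J`: the set of points of type `J` with respect to the tropical (min-plus)
hyperplane with apex `0`. -/
noncomputable def tropType {d : ℕ} (J : Finset (Fin d)) :
    Set (EuclideanSpace ℝ (Fin d)) :=
  {x | {k | x k = minCoord x} = (J : Set (Fin d))}

/-- `H_{i,p}^+`: the open sector of the tropical hyperplane with apex `p`
corresponding to coordinate `i`. -/
def openSector {d : ℕ} (i : Fin d) (p : EuclideanSpace ℝ (Fin d)) :
    Set (EuclideanSpace ℝ (Fin d)) :=
  {x | ∀ j, j ≠ i → x i - p i < x j - p j}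

/-- `A` approximates `K`: there is `ε > 0` such that every point of `K` at
(Euclidean) distance at least `ε` from the relative boundary `cl K \ K` of `K`
belongs to `A` (with the distance to the empty set taken to be `+∞`). -/
def Approximates {d : ℕ} (A K : Set (EuclideanSpace ℝ (Fin d))) : Prop :=
  ∃ ε > (0 : ℝ), ∀ x ∈ K, ENNReal.ofReal ε ≤ infEdist x (closure K \ K) → x ∈ A

/-!
For `x` in `T_J` with `j₀ ∈ J`, call `x k - x j₀`, `k ∉ J`, the gaps of `x`. The relative boundary
of `T_J` consists of the points of its closure with a vanishing gap, so the distance from `x` to it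
is at most the smallest gap and at least half of it. Hence approximating `T_J` means containing all
points of `T_J` whose gaps are large enough.

If `i ∈ J`, membership of `x ∈ T_J` in the sector at `i` with apex `p` requires `p j < p i` for
`j ∈ J \ {i}` and `p k - p i < x k - x i` for `k ∉ J`, and the latter holds for large gaps. If
`i ∉ J`, points with a large gap at `i` lie outside the sector.
-/

section TropType

variable {d : ℕ} {J : Finset (Fin d)} {j₀ : Fin d} {x : EuclideanSpace ℝ (Fin d)}

theorem minCoord_le (x : EuclideanSpace ℝ (Fin d)) (k : Fin d) : minCoord x ≤ x k :=
  csInf_le (Set.finite_range _).bddBelow ⟨k, rfl⟩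

theorem minCoord_eq_of_forall_le (h : ∀ k, x j₀ ≤ x k) : minCoord x = x j₀ :=
  IsLeast.csInf_eq ⟨⟨j₀, rfl⟩, Set.forall_mem_range.2 h⟩

theorem mem_tropType_iff (hj₀ : j₀ ∈ J) :
    x ∈ tropType J ↔ (∀ j ∈ J, x j = x j₀) ∧ ∀ k ∉ J, x j₀ < x k := by
  simp only [tropType, Set.mem_ofPred_eq, Set.ext_iff, Finset.mem_coe]
  constructor
  · intro h
    have hmin : x j₀ = minCoord x := (h j₀).2 hj₀
    refine ⟨fun j hj => ((h j).2 hj).trans hmin.symm, fun k hk => ?_⟩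
    exact hmin ▸ (minCoord_le x k).lt_of_ne fun e => hk ((h k).1 e.symm)
  · rintro ⟨heq, hlt⟩ k
    have hmin : minCoord x = x j₀ := minCoord_eq_of_forall_le fun l =>
      if hl : l ∈ J then (heq l hl).ge else (hlt l hl).le
    rw [hmin]
    exact ⟨fun e => by_contra fun hk => (hlt k hk).ne' e, heq k⟩

/-- The indicator vector of the complement of `J`. Its positive multiples are points of type `J`,
and adding them to a point of the closure of `tropType J` moves it into `tropType J`. -/
noncomputable def complIndicator (J : Finset (Fin d)) : EuclideanSpace ℝ (Fin d) :=
  WithLp.toLp 2 fun k => if k ∈ J then 0 else 1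

theorem complIndicator_apply_of_mem {k : Fin d} (hk : k ∈ J) : complIndicator J k = 0 :=
  if_pos hk

theorem complIndicator_apply_of_notMem {k : Fin d} (hk : k ∉ J) : complIndicator J k = 1 :=
  if_neg hk

theorem add_smul_complIndicator_mem_tropType (hj₀ : j₀ ∈ J) (heq : ∀ j ∈ J, x j = x j₀)
    (hle : ∀ k ∉ J, x j₀ ≤ x k) {t : ℝ} (ht : 0 < t) :
    x + t • complIndicator J ∈ tropType J := by
  refine (mem_tropType_iff hj₀).2 ⟨fun j hj => ?_, fun k hk => ?_⟩
  · simp [complIndicator_apply_of_mem, hj, hj₀, heq j hj]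
  · simpa [complIndicator_apply_of_mem hj₀, complIndicator_apply_of_notMem hk]
      using (hle k hk).trans_lt (lt_add_of_pos_right _ ht)

theorem smul_complIndicator_mem_tropType (hJ : J.Nonempty) {t : ℝ} (ht : 0 < t) :
    t • complIndicator J ∈ tropType J := by
  obtain ⟨j₀, hj₀⟩ := hJ
  simpa using add_smul_complIndicator_mem_tropType (x := 0) hj₀ (by simp) (by simp) ht

theorem mem_closure_tropType_iff (hj₀ : j₀ ∈ J) :
    x ∈ closure (tropType J) ↔ (∀ j ∈ J, x j = x j₀) ∧ ∀ k ∉ J, x j₀ ≤ x k := by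
  constructor
  · have hclosed : IsClosed {y : EuclideanSpace ℝ (Fin d) |
        (∀ j ∈ J, y j = y j₀) ∧ ∀ k ∉ J, y j₀ ≤ y k} := by
      simp only [Set.ofPred_and, Set.ofPred_forall]
      exact (isClosed_biInter fun j _ => isClosed_eq (by fun_prop) (by fun_prop)).inter
        (isClosed_biInter fun k _ => isClosed_le (by fun_prop) (by fun_prop))
    refine fun hx => closure_minimal (fun y hy => ?_) hclosed hx
    obtain ⟨heq, hlt⟩ := (mem_tropType_iff hj₀).1 hy
    exact ⟨heq, fun k hk => (hlt k hk).le⟩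
  · rintro ⟨heq, hle⟩
    have htendsto : Filter.Tendsto (fun t : ℝ => x + t • complIndicator J)
        (nhdsWithin 0 (Set.Ioi 0)) (nhds x) :=
      Continuous.tendsto' (by fun_prop) 0 x (by simp) |>.mono_left nhdsWithin_le_nhds
    exact mem_closure_of_tendsto htendsto <| eventually_mem_nhdsWithin.mono fun t ht =>
      add_smul_complIndicator_mem_tropType hj₀ heq hle ht

theorem mem_closure_tropType_diff_iff (hj₀ : j₀ ∈ J) :
    x ∈ closure (tropType J) \ tropType J ↔
      (∀ j ∈ J, x j = x j₀) ∧ (∀ k ∉ J, x j₀ ≤ x k) ∧ ∃ k ∉ J, x k = x j₀ := by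
  rw [Set.mem_sdiff, mem_closure_tropType_iff hj₀, mem_tropType_iff hj₀]
  constructor
  · rintro ⟨⟨heq, hle⟩, hnot⟩
    push Not at hnot
    obtain ⟨k, hk, hkj₀⟩ := hnot heq
    exact ⟨heq, hle, k, hk, hkj₀.antisymm (hle k hk)⟩
  · rintro ⟨heq, hle, k, hk, hkj₀⟩
    exact ⟨⟨heq, hle⟩, fun h => (h.2 k hk).ne' hkj₀⟩

theorem infEDist_closure_tropType_diff_le (hj₀ : j₀ ∈ J) (hx : x ∈ tropType J) {k : Fin d}
    (hk : k ∉ J) :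
    Metric.infEDist x (closure (tropType J) \ tropType J) ≤ ENNReal.ofReal (x k - x j₀) := by
  obtain ⟨heq, hlt⟩ := (mem_tropType_iff hj₀).1 hx
  set y := x + EuclideanSpace.single k (x j₀ - x k) with hy
  have hy_self : y k = x j₀ := by simp [hy]
  have hy_ne : ∀ l ≠ k, y l = x l := fun l hl => by simp [hy, hl]
  have hy_mem : ∀ j ∈ J, y j = x j := fun j hj => hy_ne j (ne_of_mem_of_not_mem hj hk)
  have hy_boundary : y ∈ closure (tropType J) \ tropType J := by
    refine (mem_closure_tropType_diff_iff hj₀).2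
      ⟨fun j hj => ?_, fun l hl => ?_, k, hk, hy_self.trans (hy_mem j₀ hj₀).symm⟩
    · rw [hy_mem j hj, hy_mem j₀ hj₀, heq j hj]
    · rw [hy_mem j₀ hj₀]
      obtain rfl | hlk := eq_or_ne l k
      · exact hy_self.ge
      · exact (hy_ne l hlk).symm ▸ (hlt l hl).le
  have hdist : dist x y = x k - x j₀ := by
    rw [hy, dist_self_add_right, PiLp.norm_single, Real.norm_eq_abs, abs_sub_comm,
      abs_of_pos (sub_pos.2 (hlt k hk))]
  calc Metric.infEDist x (closure (tropType J) \ tropType J)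
      ≤ edist x y := Metric.infEDist_le_edist_of_mem hy_boundary
    _ = ENNReal.ofReal (x k - x j₀) := by rw [edist_dist, hdist]

theorem le_infEDist_closure_tropType_diff (hj₀ : j₀ ∈ J) {ε : ℝ}
    (hgap : ∀ k ∉ J, 2 * ε ≤ x k - x j₀) :
    ENNReal.ofReal ε ≤ Metric.infEDist x (closure (tropType J) \ tropType J) := by
  refine Metric.le_infEDist.2 fun y hy => ?_
  obtain ⟨-, -, k, hk, hyk⟩ := (mem_closure_tropType_diff_iff hj₀).1 hy
  have hdist : 2 * ε ≤ 2 * dist x y :=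
    calc 2 * ε ≤ x k - x j₀ := hgap k hk
      _ = (x k - y k) + (y j₀ - x j₀) := by rw [hyk]; ring
      _ ≤ |x k - y k| + |y j₀ - x j₀| := add_le_add (le_abs_self _) (le_abs_self _)
      _ ≤ dist x y + dist y x :=
        add_le_add (PiLp.dist_apply_le x y k) (PiLp.dist_apply_le y x j₀)
      _ = 2 * dist x y := by rw [dist_comm y x, two_mul]
  rw [edist_dist]
  exact ENNReal.ofReal_le_ofReal (by linarith)

theorem approximates_tropType_iff (hj₀ : j₀ ∈ J) {A : Set (EuclideanSpace ℝ (Fin d))} :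
    Approximates A (tropType J) ↔
      ∃ R > (0 : ℝ), ∀ x ∈ tropType J, (∀ k ∉ J, R ≤ x k - x j₀) → x ∈ A := by
  constructor
  · rintro ⟨ε, hε, hA⟩
    exact ⟨2 * ε, by positivity, fun x hx hgap =>
      hA x hx (le_infEDist_closure_tropType_diff hj₀ hgap)⟩
  · rintro ⟨R, hR, hA⟩
    refine ⟨R, hR, fun x hx hdist => hA x hx fun k hk => ?_⟩
    have hlt : x j₀ < x k := ((mem_tropType_iff hj₀).1 hx).2 k hk
    exact (ENNReal.ofReal_le_ofReal_iff (sub_nonneg.2 hlt.le)).1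
      (hdist.trans (infEDist_closure_tropType_diff_le hj₀ hx hk))

end TropType

section OpenSector

variable {d : ℕ} {p : EuclideanSpace ℝ (Fin d)} {i : Fin d} {J : Finset (Fin d)}

theorem eventually_smul_complIndicator_mem_openSector (hJ : J.Nonempty)
    (h : Approximates (openSector i p) (tropType J)) :
    ∀ᶠ t : ℝ in Filter.atTop, t • complIndicator J ∈ openSector i p := by
  obtain ⟨j₀, hj₀⟩ := hJ
  obtain ⟨R, hR, hA⟩ := (approximates_tropType_iff hj₀).1 h
  filter_upwards [Filter.eventually_ge_atTop R] with t ht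
  refine hA _ (smul_complIndicator_mem_tropType ⟨j₀, hj₀⟩ (hR.trans_le ht)) fun k hk => ?_
  simpa [complIndicator_apply_of_mem hj₀, complIndicator_apply_of_notMem hk] using ht

theorem mem_of_approximates_openSector (hJ : J.Nonempty)
    (h : Approximates (openSector i p) (tropType J)) : i ∈ J := by
  by_contra hi
  have ⟨j₀, hj₀⟩ := hJ
  obtain ⟨t, hmem, ht⟩ := ((eventually_smul_complIndicator_mem_openSector hJ h).and
    (Filter.eventually_ge_atTop (p i - p j₀))).exists
  have hlt : t - p i < 0 - p j₀ := by
    simpa [complIndicator_apply_of_mem hj₀, complIndicator_apply_of_notMem hi]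
      using hmem j₀ (ne_of_mem_of_not_mem hj₀ hi)
  linarith

theorem apex_lt_of_approximates_openSector (h : Approximates (openSector i p) (tropType J))
    (hi : i ∈ J) {j : Fin d} (hj : j ∈ J) (hji : j ≠ i) : p j < p i := by
  obtain ⟨t, hmem⟩ := (eventually_smul_complIndicator_mem_openSector ⟨i, hi⟩ h).exists
  simpa [complIndicator_apply_of_mem, hi, hj] using hmem j hji

theorem approximates_openSector_of_forall_lt (hi : i ∈ J) (hp : ∀ j ∈ J, j ≠ i → p j < p i) :
    Approximates (openSector i p) (tropType J) := by
  refine (approximates_tropType_iff hi).2 ⟨2 * ‖p‖ + 1, by positivity, fun x hx hgap j hji => ?_⟩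
  by_cases hj : j ∈ J
  · have hxj : x j = x i := ((mem_tropType_iff hi).1 hx).1 j hj
    linarith [hp j hj hji]
  · have hpi : -‖p‖ ≤ p i := (abs_le.1 (PiLp.norm_apply_le p i)).1
    have hpj : p j ≤ ‖p‖ := (abs_le.1 (PiLp.norm_apply_le p j)).2
    linarith [hgap j hj]

end OpenSector

theorem stmt_8_general {d : ℕ} (p : EuclideanSpace ℝ (Fin d)) (i : Fin d)
    (J : Finset (Fin d)) (hJ : J.Nonempty) :
    Approximates (openSector i p) (tropType J) ↔
      i ∈ J ∧ ∀ j ∈ J, j ≠ i → p j < p i := by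
  refine ⟨fun h => ?_, fun ⟨hi, hp⟩ => approximates_openSector_of_forall_lt hi hp⟩
  have hi : i ∈ J := mem_of_approximates_openSector hJ h
  exact ⟨hi, fun j hj hji => apex_lt_of_approximates_openSector h hi hj hji⟩

theorem stmt_8 {d : ℕ} (hd : 2 ≤ d) (p : EuclideanSpace ℝ (Fin d))
    (hp : Function.Injective fun l => p l) (i : Fin d)
    (J : Finset (Fin d)) (hJ : J.Nonempty) :
    Approximates (openSector i p) (tropType J) ↔
      i ∈ J ∧ ∀ j ∈ J, j ≠ i → p j < p i :=
  stmt_8_general p i J hJ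
end
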